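/- arXiv:2512.02355 — 10 statements merged into one kernel-verified Lean document; each statement's English description precedes it below -/
import Mathlib

section
/- Let X be a standard Borel space and E an equivalence relation on X. Suppose there exist a Polish space Y and a Borel reduction f : X → Y of E to equality on Y such that f(X) is Borel in Y. Then for every Polish space Z and every Borel reduction g : X → Z of E to equality on Z, the image g(X) is Borel in Z. -/
open MeasureTheory

/-!
If `f` and `g` both reduce `E` to equality, then `f x ↦ g x` is a well-defined injection
`k : f(X) → Z` with image `g(X)`. Since `f(X)` is Borel, it is itself a standard Borel space,
and `k` is Borel because `k ∘ f = g` is: for a Borel surjection between standard Borel spaces,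
a set whose preimage is Borel is Borel (a consequence of Lusin separation,
`Measurable.measurable_comp_iff_of_surjective`). The Lusin-Souslin theorem
(`Measurable.measurableEmbedding`) then says that the injective Borel map `k` has Borel image.
-/

/-- If a standard Borel `X` with equivalence relation `E` admits a Borel
reduction to equality on some Polish space with Borel image (i.e. `E` is faithfully smooth),
then *every* Borel reduction of `E` to equality on a Polish space has Borel image. -/
theorem every_reduction_has_borel_range {X : Type*} [MeasurableSpace X] [StandardBorelSpace X]
    (E : X → X → Prop) (hE : Equivalence E)
    (h : ∃ (Y : Type) (tY : TopologicalSpace Y), @PolishSpace Y tY ∧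
        ∃ f : X → Y, @Measurable X Y _ (@borel Y tY) f ∧
          (∀ x x', E x x' ↔ f x = f x') ∧ MeasurableSet[@borel Y tY] (Set.range f)) :
    ∀ (Z : Type) [TopologicalSpace Z] [PolishSpace Z] [MeasurableSpace Z] [BorelSpace Z]
      (g : X → Z), Measurable g → (∀ x x', E x x' ↔ g x = g x') →
        MeasurableSet (Set.range g) := by
  obtain ⟨Y, tY, hY, f, hf, hEf, hfr⟩ := h
  intro Z _ _ _ _ g hg hEg
  letI : MeasurableSpace Y := borel Y
  haveI : BorelSpace Y := ⟨rfl⟩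
  haveI : StandardBorelSpace (Set.range f) := hfr.standardBorel
  let p : X → Set.range f := Set.rangeFactorization f
  have hp : Measurable p := hf.subtype_mk
  have hps : Function.Surjective p := Set.rangeFactorization_surjective
  have hfg : ∀ x x', f x = f x' ↔ g x = g x' := fun x x' => (hEf x x').symm.trans (hEg x x')
  let k : Set.range f → Z := fun y => g (Function.surjInv hps y)
  have hkp : k ∘ p = g := by
    funext x
    exact (hfg _ _).1 (congrArg Subtype.val (Function.surjInv_eq hps (p x)))
  have hk : Measurable k := (hp.measurable_comp_iff_of_surjective hps).1 (hkp ▸ hg)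
  have hki : Function.Injective k := by
    intro y y' h
    obtain ⟨x, rfl⟩ := hps y
    obtain ⟨x', rfl⟩ := hps y'
    have h' : g x = g x' := by
      rw [← hkp]
      exact h
    exact Subtype.ext ((hfg x x').2 h')
  rw [← hkp, hps.range_comp]
  exact (hk.measurableEmbedding hki).measurableSet_range
end

section
/- Let X be a standard Borel space and E an analytic equivalence relation on X with at least two equivalence classes such that for any two Borel reductions h₁, h₂ of E to itself there exists x ∈ X with h₁(x) E h₂(x). Then for every path-connected Polish space Y with basepoint y₀, E is not Borel bireducible with the homotopy relation ∼_Y on the loop space ΩY. -/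
/-!
Suppose `f` reduces `E` to loop homotopy and `g` reduces loop homotopy to `E`. Concatenation with a
fixed loop `a` is a continuous map `γ ↦ a · γ` of the loop space, and by cancellation in the
fundamental group it is a reduction of loop homotopy to itself. Hence `g ∘ f` and
`x ↦ g (a · f x)` are both Borel self-reductions of `E`. If they agree modulo `E` at some `x`, then
`f x` and `a · f x` are homotopic, so `a` is null-homotopic. As `E` has two inequivalent points,
their images under `f` are two non-homotopic loops, and one of them is a choice of `a` that is not
null-homotopic.
-/


open MeasureTheory

/-- The loop space of a pointed topological space. -/
abbrev Loop (Y : Type*) [TopologicalSpace Y] (y₀ : Y) : Type _ :=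
  {f : C(unitInterval, Y) // f 0 = y₀ ∧ f 1 = y₀}

noncomputable instance Loop.instMeasurableSpace (Y : Type*) [TopologicalSpace Y] (y₀ : Y) :
    MeasurableSpace (Loop Y y₀) := borel (Loop Y y₀)

instance Loop.instBorelSpace (Y : Type*) [TopologicalSpace Y] (y₀ : Y) :
    BorelSpace (Loop Y y₀) := ⟨rfl⟩

/-- Two loops are homotopic rel endpoints. -/
def LoopHomotopic {Y : Type*} [TopologicalSpace Y] {y₀ : Y} (f g : Loop Y y₀) : Prop :=
  ∃ H : C(unitInterval × unitInterval, Y),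
    (∀ s, H (s, 0) = f.1 s) ∧ (∀ s, H (s, 1) = g.1 s) ∧
    (∀ t, H (0, t) = y₀ ∧ H (1, t) = y₀)

def IsBorelReduction {X Y : Type*} [MeasurableSpace X] [MeasurableSpace Y]
    (f : X → Y) (E : X → X → Prop) (F : Y → Y → Prop) : Prop :=
  Measurable f ∧ ∀ x x', E x x' ↔ F (f x) (f x')

def BorelReducible {X Y : Type*} [MeasurableSpace X] [MeasurableSpace Y]
    (E : X → X → Prop) (F : Y → Y → Prop) : Prop :=
  ∃ f : X → Y, IsBorelReduction f E F

def BorelBireducible {X Y : Type*} [MeasurableSpace X] [MeasurableSpace Y]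
    (E : X → X → Prop) (F : Y → Y → Prop) : Prop :=
  BorelReducible E F ∧ BorelReducible F E

/-- A subset of a standard Borel space is analytic iff it is empty or the image of
Baire space under a Borel map. -/
def IsAnalyticSB {α : Type*} [MeasurableSpace α] (A : Set α) : Prop :=
  A = ∅ ∨ ∃ f : (ℕ → ℕ) → α, Measurable f ∧ Set.range f = A

namespace Loop

variable {Y : Type*} [TopologicalSpace Y] {y₀ : Y}

/-- A loop viewed as a Mathlib path from the basepoint to itself. -/
def toPath (f : Loop Y y₀) : Path y₀ y₀ := ⟨f.1, f.2.1, f.2.2⟩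

/-- A Mathlib path from the basepoint to itself viewed as a loop. -/
def ofPath (p : Path y₀ y₀) : Loop Y y₀ := ⟨p.toContinuousMap, p.source, p.target⟩

/-- The class of a loop in the fundamental group. -/
def homotopyClass (f : Loop Y y₀) : FundamentalGroup Y y₀ :=
  Path.Homotopic.Quotient.mk f.toPath

/-- Concatenation of loops: first `a`, then `f`. -/
noncomputable def concat (a f : Loop Y y₀) : Loop Y y₀ := ofPath (a.toPath.trans f.toPath)

/-- `LoopHomotopic` takes the homotopy parameter as second coordinate, Mathlib's homotopies take it
as first coordinate; up to this swap the two notions coincide. -/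
lemma loopHomotopic_iff (f g : Loop Y y₀) :
    LoopHomotopic f g ↔ f.homotopyClass = g.homotopyClass := by
  refine Iff.trans ?_ Path.Homotopic.Quotient.eq.symm
  constructor
  · rintro ⟨H, h0, h1, hb⟩
    refine ⟨⟨⟨H.comp .prodSwap, h0, h1⟩, ?_⟩⟩
    rintro t x (rfl | rfl)
    · exact (hb t).1.trans f.2.1.symm
    · exact (hb t).2.trans f.2.2.symm
  · rintro ⟨F⟩
    exact ⟨F.toContinuousMap.comp .prodSwap, F.apply_zero, F.apply_one,
      fun t => ⟨F.source t, F.target t⟩⟩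

/-- The order of the factors is reversed because multiplication in Mathlib's `FundamentalGroup` is
composition of endomorphisms in the fundamental groupoid. -/
lemma homotopyClass_concat (a f : Loop Y y₀) :
    (a.concat f).homotopyClass = f.homotopyClass * a.homotopyClass := rfl

lemma continuous_concat (a : Loop Y y₀) : Continuous a.concat := by
  have h₁ : Continuous (toPath : Loop Y y₀ → Path y₀ y₀) :=
    continuous_induced_rng.2 continuous_subtype_val
  have h₂ : Continuous (ofPath : Path y₀ y₀ → Loop Y y₀) :=
    Continuous.subtype_mk continuous_induced_dom _
  exact h₂.comp (Path.continuous_trans.comp (continuous_const.prodMk h₁))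

end Loop

/-- If `E` is an analytic equivalence relation on a standard Borel space
with at least two classes, such that any two Borel self-reductions agree modulo `E`
somewhere, then `E` is not Borel bireducible with the homotopy relation on the loop
space of any path-connected Polish space. -/
theorem obstruction {X : Type*} [MeasurableSpace X] [StandardBorelSpace X]
    (E : X → X → Prop) (hE : Equivalence E)
    (hAnalytic : IsAnalyticSB {p : X × X | E p.1 p.2})
    (hTwoClasses : ∃ x y : X, ¬ E x y)
    (hSelf : ∀ h₁ h₂ : X → X, IsBorelReduction h₁ E E → IsBorelReduction h₂ E E →
      ∃ x : X, E (h₁ x) (h₂ x)) :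
    ∀ (Y : Type) [TopologicalSpace Y] [PolishSpace Y] [PathConnectedSpace Y] (y₀ : Y),
      ¬ BorelBireducible E (LoopHomotopic (Y := Y) (y₀ := y₀)) := by
  rintro Y _ _ _ y₀ ⟨⟨f, hf, hfE⟩, ⟨g, hg, hgE⟩⟩
  obtain ⟨a, ha⟩ : ∃ a : Loop Y y₀, a.homotopyClass ≠ 1 := by
    by_contra! h
    obtain ⟨x, y, hxy⟩ := hTwoClasses
    exact hxy ((hfE x y).2 ((Loop.loopHomotopic_iff _ _).2 ((h _).trans (h _).symm)))
  have h₁ : IsBorelReduction (fun x => g (f x)) E E :=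
    ⟨hg.comp hf, fun x x' => (hfE x x').trans (hgE _ _)⟩
  have h₂ : IsBorelReduction (fun x => g (a.concat (f x))) E E := by
    refine ⟨hg.comp (a.continuous_concat.measurable.comp hf), fun x x' => ?_⟩
    rw [hfE, ← hgE, Loop.loopHomotopic_iff, Loop.loopHomotopic_iff, Loop.homotopyClass_concat,
      Loop.homotopyClass_concat, mul_left_inj]
  obtain ⟨x, hx⟩ := hSelf _ _ h₁ h₂
  rw [← hgE, Loop.loopHomotopic_iff, Loop.homotopyClass_concat, left_eq_mul] at hx
  exact ha hx
end

section
/- Let X be a standard Borel space and E an analytic equivalence relation on X with exactly one equivalence class that is not Borel. Then for every path-connected Polish space Y with basepoint y₀, E is not Borel bireducible with the homotopy relation ∼_Y on the loop space ΩY. -/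
open MeasureTheory

/-!
Concatenation of loops makes `Loop Y y₀` a group up to homotopy, and for loops `h`, `k` the
continuous map `g ↦ (k · h⁻¹) · g` reduces the homotopy relation to itself while sending the class
of `h` to the class of `k`. Hence either every homotopy class of loops is Borel or none is
(`measurableSet_loopClass`).

Suppose `E` and the homotopy relation are bireducible. Preimages of Borel sets under a Borel
reduction are Borel, so the reduction of `E` sends the non-Borel class of `E` into a non-Borel
homotopy class, and therefore no homotopy class is Borel. By the same argument, the reduction in
the other direction sends every loop into a non-Borel class of `E`. There is only one such class,
so all loops are homotopic; but then the only homotopy class is the whole loop space, which is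
Borel.
-/

/-- A loop in the subtype encoding `Loop Y y₀`, regarded as a Mathlib `Path` from `y₀` to itself. -/
def Loop.toPath_s4 {Y : Type*} [TopologicalSpace Y] {y₀ : Y} (f : Loop Y y₀) : Path y₀ y₀ :=
  ⟨f.1, f.2.1, f.2.2⟩

/-- A Mathlib `Path` from `y₀` to itself, regarded as an element of `Loop Y y₀`. -/
def Loop.ofPath_s4 {Y : Type*} [TopologicalSpace Y] {y₀ : Y} (p : Path y₀ y₀) : Loop Y y₀ :=
  ⟨p.toContinuousMap, p.source, p.target⟩

theorem Loop.continuous_toPath {Y : Type*} [TopologicalSpace Y] {y₀ : Y} :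
    Continuous (Loop.toPath_s4 (Y := Y) (y₀ := y₀)) :=
  continuous_induced_rng.2 continuous_subtype_val

theorem Loop.continuous_ofPath {Y : Type*} [TopologicalSpace Y] {y₀ : Y} :
    Continuous (Loop.ofPath_s4 (Y := Y) (y₀ := y₀)) :=
  Continuous.subtype_mk continuous_induced_dom _

/-- `LoopHomotopic` is Mathlib's homotopy of paths; the two differ in the order of the coordinates
of the square (`Path.Homotopy` takes the homotopy parameter first). -/
theorem loopHomotopic_iff {Y : Type*} [TopologicalSpace Y] {y₀ : Y} (f g : Loop Y y₀) :
    LoopHomotopic f g ↔ f.toPath_s4.Homotopic g.toPath_s4 := by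
  constructor
  · rintro ⟨H, h0, h1, ht⟩
    refine ⟨{ toContinuousMap := H.comp ⟨Prod.swap, continuous_swap⟩
              map_zero_left := fun s => h0 s
              map_one_left := fun s => h1 s
              prop' := ?_ }⟩
    rintro t s (rfl | rfl)
    · exact (ht t).1.trans f.2.1.symm
    · exact (ht t).2.trans f.2.2.symm
  · rintro ⟨H⟩
    exact ⟨H.toContinuousMap.comp ⟨Prod.swap, continuous_swap⟩,
      fun s => H.map_zero_left s, fun s => H.map_one_left s,
      fun t => ⟨H.source t, H.target t⟩⟩

/-- Homogeneity of the homotopy relation: if one homotopy class of loops is Borel, then so is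
every other, being its preimage under left concatenation with a fixed loop. -/
theorem measurableSet_loopClass {Y : Type*} [TopologicalSpace Y] {y₀ : Y} (h k : Loop Y y₀)
    (hk : MeasurableSet {g | LoopHomotopic k g}) : MeasurableSet {g | LoopHomotopic h g} := by
  let T : Loop Y y₀ → Loop Y y₀ :=
    fun g => Loop.ofPath_s4 ((k.toPath_s4.trans h.toPath_s4.symm).trans g.toPath_s4)
  have hT : Continuous T :=
    Loop.continuous_ofPath.comp (continuous_const.path_trans Loop.continuous_toPath)
  have key : {g | LoopHomotopic h g} = T ⁻¹' {g | LoopHomotopic k g} := by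
    ext g
    change LoopHomotopic h g ↔ LoopHomotopic k (T g)
    rw [loopHomotopic_iff, loopHomotopic_iff]
    change _ ↔ k.toPath_s4.Homotopic ((k.toPath_s4.trans h.toPath_s4.symm).trans g.toPath_s4)
    rw [← Path.Homotopic.Quotient.eq, ← Path.Homotopic.Quotient.eq]
    simp only [Path.Homotopic.Quotient.mk_trans, Path.Homotopic.Quotient.mk_symm]
    generalize Path.Homotopic.Quotient.mk k.toPath_s4 = a
    generalize Path.Homotopic.Quotient.mk h.toPath_s4 = b
    generalize Path.Homotopic.Quotient.mk g.toPath_s4 = c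
    constructor
    · rintro rfl
      rw [Path.Homotopic.Quotient.trans_assoc, Path.Homotopic.Quotient.symm_trans,
        Path.Homotopic.Quotient.trans_refl]
    · intro e
      -- Multiply `a = (a · b⁻¹) · c` on the left by `b · a⁻¹`.
      have e' := congrArg (fun x => b.trans (a.symm.trans x)) e
      simp only [Path.Homotopic.Quotient.symm_trans, Path.Homotopic.Quotient.trans_refl] at e'
      rw [Path.Homotopic.Quotient.trans_assoc,
        ← Path.Homotopic.Quotient.trans_assoc a.symm, Path.Homotopic.Quotient.symm_trans,
        Path.Homotopic.Quotient.refl_trans, ← Path.Homotopic.Quotient.trans_assoc,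
        Path.Homotopic.Quotient.trans_symm, Path.Homotopic.Quotient.refl_trans] at e'
      exact e'
  rw [key]
  exact hT.measurable hk

/-- A Borel reduction reflects Borelness of classes: the class of `x` is the preimage of the class
of `f x`. -/
theorem IsBorelReduction.measurableSet_class {X Z : Type*} [MeasurableSpace X] [MeasurableSpace Z]
    {f : X → Z} {E : X → X → Prop} {F : Z → Z → Prop} (hf : IsBorelReduction f E F) (x : X)
    (h : MeasurableSet {z | F (f x) z}) : MeasurableSet {y | E x y} := by
  have key : {y | E x y} = f ⁻¹' {z | F (f x) z} := Set.ext fun y => hf.2 x y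
  rw [key]
  exact hf.1 h

/-- If `E` is an analytic equivalence relation on a standard Borel space
with exactly one non-Borel class, then `E` is not Borel bireducible with the homotopy
relation on the loop space of any path-connected Polish space. -/
theorem one_nonBorel_class_obstruction {X : Type*} [MeasurableSpace X] [StandardBorelSpace X]
    (E : X → X → Prop) (hE : Equivalence E)
    (hAnalytic : IsAnalyticSB {p : X × X | E p.1 p.2})
    (hOne : ∃ x : X, ¬ MeasurableSet {y | E x y} ∧
      ∀ x' : X, ¬ MeasurableSet {y | E x' y} → E x x') :
    ∀ (Y : Type) [TopologicalSpace Y] [PolishSpace Y] [PathConnectedSpace Y] (y₀ : Y),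
      ¬ BorelBireducible E (LoopHomotopic (Y := Y) (y₀ := y₀)) := by
  rintro Y _ _ _ y₀ ⟨⟨f, hf⟩, g, hg⟩
  obtain ⟨x, hx, hux⟩ := hOne
  have hnon : ∀ k : Loop Y y₀, ¬ MeasurableSet {l | LoopHomotopic k l} := fun k hk =>
    hx (hf.measurableSet_class x (measurableSet_loopClass (f x) k hk))
  have hgx : ∀ k : Loop Y y₀, E x (g k) := fun k =>
    hux (g k) fun hm => hnon k (hg.measurableSet_class k hm)
  have hall : {l | LoopHomotopic (f x) l} = Set.univ :=
    Set.eq_univ_of_forall fun l =>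
      (hg.2 (f x) l).2 (hE.trans (hE.symm (hgx (f x))) (hgx l))
  apply hnon (f x)
  rw [hall]
  exact MeasurableSet.univ
end

section
/- (Becker) For every analytic equivalence relation E on the Cantor space 2^ℕ there exists a compact subset K ⊆ ℝ³ such that the path-connectedness relation on K (relating points x, y ∈ K iff there is a continuous path in K from x to y) is Borel bireducible with E. -/
/-!
Write the analytic relation `E` as a projection: there is a closed set `P` of triples `(x, y, u)` in
Cantor space such that `E x y` holds iff some `(x, y, u) ∈ P` has a *good* label `u`, goodness being
a `Gδ` condition. Indeed, `E` is the range of a continuous `g` on Baire space, and `P` is the closure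
of the set of all `(g w, code w)`, where `code w` is the graph of `w`. A good label in `P` is the code
of some `w`, and by continuity of `g` the first two entries are then `g w` (`exists_edges`).

Each `p = (x, y, u) ∈ P` becomes an edge in `ℝ³` from a vertex `(0, e x, -1)` to a vertex
`(0, e y, 1)`, where `e` embeds Cantor space in `[0, 1]` and the height `h` (the last coordinate)
parametrizes the edge. Its first coordinate is `(1 - |h|) * m p` for an embedding `m` of the triples
in the line, so different edges are disjoint away from the two outer layers. The second coordinate is
linear for `h < 0`. For `h > 0` a term `amp u h * sin (1 / h)`, cut off above height `1 / 2`, is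
added, and at `h = 0` the second coordinate ranges over all of `[-2, 2]`, which makes the union `carrier`
of all edges compact (`carrier_compact`). The amplitude `amp u` tends to `0` at height `0` if `u` is
good, and is bounded away from `0` otherwise. Hence a good edge can be traversed (`joinedIn_good`),
while a bad edge is a topologist's sine curve with exactly two path components, the parts at heights
`≤ 0` and `> 0`.

The map `retr` sends the lower part of an edge to `x` and the upper part to `y`. Along a path, the
`E`-class of `retr` is locally constant (`retr_locally`): continuous maps from an interval to a
Cantor set are locally constant, so the path stays on one edge (or at one outer vertex) locally, and
it can cross height `0` only on good edges, whose ends are `E`-equivalent. Conversely every point is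
joined to the lower vertex of its image under `retr`. So `retr` reduces path-connectedness to `E`, and
`x ↦ (0, e x, -1)` is a reduction in the other direction.
-/

open MeasureTheory

namespace Becker

open Set Filter Topology

/-! ### The amplitude function -/

/-- Cantor space. -/
abbrev C := ℕ → Bool

/-- The ambient space of edges: a triple `(x, y, u)` is an edge from `x` to `y` with label `u`. -/
abbrev Q := C × C × C

/-- Reading `u` as a subset of `ℕ × ℕ`, a continuous nonnegative function of `u` that is positive
exactly when the `n`-th section of that subset is nonempty. -/
noncomputable def secWeight (n : ℕ) (u : C) : ℝ :=
  ∑' m, (1 / 2 : ℝ) ^ m * (if u (Nat.pair n m) = true then 1 else 0)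

lemma secWeight_summable (n : ℕ) (u : C) :
    Summable fun m => (1 / 2 : ℝ) ^ m * (if u (Nat.pair n m) = true then (1 : ℝ) else 0) := by
  refine Summable.of_nonneg_of_le (fun m => ?_) (fun m => ?_) summable_geometric_two
  · split_ifs <;> positivity
  · split_ifs <;> simp

lemma secWeight_nonneg (n : ℕ) (u : C) : 0 ≤ secWeight n u :=
  tsum_nonneg fun m => by split_ifs <;> positivity

lemma secWeight_continuous (n : ℕ) : Continuous (secWeight n) := by
  refine continuous_tsum (u := fun m => (1 / 2 : ℝ) ^ m) (fun m => ?_) summable_geometric_two ?_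
  · refine continuous_const.mul ?_
    exact (continuous_of_discreteTopology (f := fun b : Bool => if b = true then (1 : ℝ) else 0)).comp
      (continuous_apply (Nat.pair n m))
  · intro m u
    split_ifs <;> simp

lemma secWeight_pos {n : ℕ} {u : C} {m : ℕ} (h : u (Nat.pair n m) = true) : 0 < secWeight n u := by
  refine (secWeight_summable n u).tsum_pos (fun k => ?_) m ?_
  · split_ifs <;> positivity
  · simp [h]

lemma secWeight_eq_zero {n : ℕ} {u : C} (h : ∀ m, u (Nat.pair n m) ≠ true) :
    secWeight n u = 0 := by
  simp [secWeight, h]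

/-- A label `u` is good if all its sections are nonempty. -/
def Good (u : C) : Prop := ∀ n, ∃ m, u (Nat.pair n m) = true

/-- The amplitude of the oscillation at height `h` along an edge with label `u`. -/
noncomputable def amp (u : C) (h : ℝ) : ℝ :=
  ∑' n, (1 / 2 : ℝ) ^ (n + 1) * (h / (h + secWeight n u))

lemma summable_half : Summable fun n : ℕ => (1 / 2 : ℝ) ^ (n + 1) :=
  (summable_nat_add_iff 1).2 summable_geometric_two

lemma amp_ratio_nonneg (n : ℕ) (u : C) {h : ℝ} (hh : 0 ≤ h) : 0 ≤ h / (h + secWeight n u) :=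
  div_nonneg hh (add_nonneg hh (secWeight_nonneg n u))

lemma amp_ratio_le (n : ℕ) (u : C) {h : ℝ} (hh : 0 ≤ h) : h / (h + secWeight n u) ≤ 1 :=
  div_le_one_of_le₀ (by linarith [secWeight_nonneg n u]) (add_nonneg hh (secWeight_nonneg n u))

lemma amp_term_nonneg (n : ℕ) (u : C) {h : ℝ} (hh : 0 ≤ h) :
    0 ≤ (1 / 2 : ℝ) ^ (n + 1) * (h / (h + secWeight n u)) :=
  mul_nonneg (by positivity) (amp_ratio_nonneg n u hh)

lemma amp_term_le (n : ℕ) (u : C) {h : ℝ} (hh : 0 ≤ h) :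
    (1 / 2 : ℝ) ^ (n + 1) * (h / (h + secWeight n u)) ≤ (1 / 2 : ℝ) ^ (n + 1) :=
  mul_le_of_le_one_right (by positivity) (amp_ratio_le n u hh)

lemma amp_summable (u : C) {h : ℝ} (hh : 0 ≤ h) :
    Summable fun n => (1 / 2 : ℝ) ^ (n + 1) * (h / (h + secWeight n u)) :=
  Summable.of_nonneg_of_le (fun n => amp_term_nonneg n u hh) (fun n => amp_term_le n u hh)
    summable_half

lemma amp_nonneg (u : C) {h : ℝ} (hh : 0 ≤ h) : 0 ≤ amp u h :=
  tsum_nonneg fun n => amp_term_nonneg n u hh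

lemma amp_le_one (u : C) {h : ℝ} (hh : 0 ≤ h) : amp u h ≤ 1 := by
  have h1 : ∑' n : ℕ, (1 / 2 : ℝ) ^ (n + 1) = 1 := by
    simp_rw [pow_succ, tsum_mul_right, tsum_geometric_two]; norm_num
  rw [← h1]
  exact (amp_summable u hh).tsum_le_tsum (fun n => amp_term_le n u hh) summable_half

lemma norm_amp_term_le (n : ℕ) (u : C) {h : ℝ} (hh : 0 ≤ h) :
    ‖(1 / 2 : ℝ) ^ (n + 1) * (h / (h + secWeight n u))‖ ≤ (1 / 2 : ℝ) ^ (n + 1) := by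
  rw [Real.norm_of_nonneg (amp_term_nonneg n u hh)]
  exact amp_term_le n u hh

lemma amp_continuousOn : ContinuousOn (fun z : C × ℝ => amp z.1 z.2) {z | 0 < z.2} := by
  refine continuousOn_tsum (u := fun n : ℕ => (1 / 2 : ℝ) ^ (n + 1)) (fun n => ?_)
    summable_half (fun n z hz => norm_amp_term_le n z.1 (le_of_lt hz))
  refine continuousOn_const.mul (continuousOn_snd.div ?_ ?_)
  · exact (continuous_snd.add ((secWeight_continuous n).comp continuous_fst)).continuousOn
  · intro z hz
    have : 0 < z.2 := hz
    have := secWeight_nonneg n z.1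
    positivity

lemma amp_tendsto {u : C} (hu : Good u) : Tendsto (amp u) (𝓝[>] 0) (𝓝 0) := by
  have key : Tendsto (amp u) (𝓝[>] 0) (𝓝 (∑' _ : ℕ, (0 : ℝ))) := by
    refine tendsto_tsum_of_dominated_convergence (bound := fun n : ℕ => (1 / 2 : ℝ) ^ (n + 1))
      summable_half (fun n => ?_) ?_
    · obtain ⟨m, hm⟩ := hu n
      have hpos := secWeight_pos hm
      have hc : ContinuousAt (fun h : ℝ => (1 / 2 : ℝ) ^ (n + 1) * (h / (h + secWeight n u))) 0 := by
        refine continuousAt_const.mul (continuousAt_id.div (continuousAt_id.add continuousAt_const) ?_)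
        simpa using hpos.ne'
      have := hc.tendsto
      simp only [zero_div, mul_zero] at this
      exact this.mono_left nhdsWithin_le_nhds
    · filter_upwards [self_mem_nhdsWithin] with h hh n
      exact norm_amp_term_le n u (le_of_lt hh)
  simpa using key

lemma amp_lower {u : C} (hu : ¬ Good u) : ∃ c > 0, ∀ h > 0, c ≤ amp u h := by
  simp only [Good, not_forall, not_exists] at hu
  obtain ⟨n, hn⟩ := hu
  refine ⟨(1 / 2) ^ (n + 1), by positivity, fun h hh => ?_⟩
  have := (amp_summable u hh.le).le_tsum n (fun k _ => amp_term_nonneg k u hh.le)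
  rw [secWeight_eq_zero hn, add_zero, div_self hh.ne', mul_one] at this
  exact this

/-! ### Coding the analytic relation by good labels -/

/-- The label coding `w`: the graph of `w`, as a subset of `ℕ × ℕ`. -/
def code (w : ℕ → ℕ) : C := fun k => decide (w k.unpair.1 = k.unpair.2)

lemma code_pair (w : ℕ → ℕ) (n m : ℕ) : code w (Nat.pair n m) = true ↔ w n = m := by
  simp [code]

lemma exists_edges {E : C → C → Prop} (hE : Equivalence E)
    (hA : MeasureTheory.AnalyticSet {p : C × C | E p.1 p.2}) :
    ∃ P : Set Q, IsClosed P ∧ (∀ p ∈ P, Good p.2.2 → E p.1 p.2.1) ∧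
      ∀ x y, E x y → ∃ p ∈ P, Good p.2.2 ∧ p.1 = x ∧ p.2.1 = y := by
  rw [MeasureTheory.AnalyticSet] at hA
  rcases hA with h0 | ⟨g, hg, hr⟩
  · have : ((fun _ => false, fun _ => false) : C × C) ∈ {p : C × C | E p.1 p.2} := hE.refl _
    rw [h0] at this
    exact this.elim
  let f : (ℕ → ℕ) → Q := fun w => ((g w).1, (g w).2, code w)
  refine ⟨closure (range f), isClosed_closure, ?_, ?_⟩
  · intro p hp hgood
    choose w hw using hgood
    have hne : (comap f (𝓝 p)).NeBot := by
      rw [comap_neBot_iff_frequently]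
      rw [mem_closure_iff_frequently] at hp
      exact hp
    have hf : Tendsto f (comap f (𝓝 p)) (𝓝 p) := tendsto_comap
    have hcode : Tendsto code (comap f (𝓝 p)) (𝓝 p.2.2) :=
      (continuous_snd.comp continuous_snd).continuousAt.tendsto.comp hf
    have hg' : Tendsto g (comap f (𝓝 p)) (𝓝 (p.1, p.2.1)) :=
      (continuous_fst.prodMk (continuous_fst.comp continuous_snd)).continuousAt.tendsto.comp hf
    have hid : Tendsto (fun v : ℕ → ℕ => v) (comap f (𝓝 p)) (𝓝 w) := by
      rw [tendsto_pi_nhds]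
      intro n
      have h1 := (tendsto_pi_nhds.1 hcode) (Nat.pair n (w n))
      rw [hw n, nhds_discrete Bool, tendsto_pure] at h1
      rw [nhds_discrete ℕ, tendsto_pure]
      exact h1.mono fun v hv => (code_pair v n (w n)).1 hv
    have hlim : (p.1, p.2.1) = g w := tendsto_nhds_unique hg' ((hg.tendsto w).comp hid)
    have : g w ∈ {p : C × C | E p.1 p.2} := hr ▸ mem_range_self w
    rw [← hlim] at this
    exact this
  · intro x y hxy
    have : (x, y) ∈ range g := by rw [hr]; exact hxy
    obtain ⟨w, hw⟩ := this
    refine ⟨f w, subset_closure (mem_range_self w), fun n => ⟨w n, (code_pair _ _ _).2 rfl⟩, ?_, ?_⟩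
    · simp [f, hw]
    · simp [f, hw]

/-! ### Cantor sets in the line -/

lemma exists_embedding_C : ∃ e : C → ℝ, Continuous e ∧ Function.Injective e ∧
    ∀ x, 0 ≤ e x ∧ e x ≤ 1 :=
  ⟨fun x => (cantorSetHomeomorphNatToBool.symm x : ℝ),
    continuous_subtype_val.comp cantorSetHomeomorphNatToBool.symm.continuous,
    Subtype.val_injective.comp cantorSetHomeomorphNatToBool.symm.injective,
    fun x => cantorSet_subset_unitInterval (cantorSetHomeomorphNatToBool.symm x).2⟩

lemma exists_embedding_Q : ∃ m : Q → ℝ, Continuous m ∧ Function.Injective m := by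
  obtain ⟨e, he, hi, -⟩ := exists_embedding_C
  let φ : (C × C) ≃ₜ C := Homeomorph.sumArrowHomeomorphProdArrow.symm.trans
    (Homeomorph.piCongrLeft (Y := fun _ : ℕ => Bool) Equiv.natSumNatEquivNat)
  refine ⟨fun p => e (φ (p.1, φ p.2)), by fun_prop, fun p q h => ?_⟩
  have := φ.injective (hi h)
  simp only [Prod.mk.injEq, EmbeddingLike.apply_eq_iff_eq] at this
  exact Prod.ext this.1 this.2

lemma exists_leftInverse {Z : Type*} [TopologicalSpace Z] [CompactSpace Z] [MeasurableSpace Z]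
    [BorelSpace Z] [Nonempty Z] {e : Z → ℝ} (he : Continuous e) (hi : Function.Injective e) :
    ∃ e' : ℝ → Z, Measurable e' ∧ ∀ x, e' (e x) = x := by
  obtain ⟨e', h1, h2⟩ := (he.isClosedEmbedding hi).measurableEmbedding.exists_measurable_extend measurable_id
    (fun _ => inferInstance)
  exact ⟨e', h1, fun x => congrFun h2 x⟩

/-- A continuous real function with values in a Cantor set is locally constant. -/
lemma eventually_const {Z : Type*} [TopologicalSpace Z] [CompactSpace Z]
    [TotallyDisconnectedSpace Z] {e : Z → ℝ} (he : Continuous e) (hi : Function.Injective e)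
    {f : ℝ → ℝ} {q : ℝ → Z} {V : Set ℝ} (hV : IsOpen V) (hf : ContinuousOn f V)
    (hq : ∀ t ∈ V, f t = e (q t)) {t₀ : ℝ} (ht : t₀ ∈ V) : ∀ᶠ t in 𝓝 t₀, q t = q t₀ := by
  obtain ⟨U, hUV, hU, htU, hc⟩ :=
    locallyConnectedSpace_iff_subsets_isOpen_isConnected.1 inferInstance t₀ V (hV.mem_nhds ht)
  have hqc : ContinuousOn q U := by
    rw [(he.isClosedEmbedding hi).isInducing.continuousOn_iff]
    exact (hf.mono hUV).congr fun t h => (hq t (hUV h)).symm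
  have hs := (hc.isPreconnected.image q hqc).subsingleton
  filter_upwards [hU.mem_nhds htU] with t h
  exact hs (mem_image_of_mem q h) (mem_image_of_mem q htU)


/-! ### The compact set -/

/-- The oscillating part of the edge with label `u` at height `h`; the factor `max 0 (1 - 2 * h)`
confines the oscillation to `h < 1 / 2`. -/
noncomputable def wig (u : C) (h : ℝ) : ℝ := max 0 (1 - 2 * h) * amp u h * Real.sin (1 / h)

lemma abs_wig_le_amp (u : C) {h : ℝ} (hh : 0 ≤ h) : |wig u h| ≤ amp u h := by
  have h1 : |max 0 (1 - 2 * h)| ≤ 1 := by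
    rw [abs_of_nonneg (le_max_left _ _)]
    exact max_le zero_le_one (by linarith)
  have h2 := Real.abs_sin_le_one (1 / h)
  have h3 := amp_nonneg u hh
  rw [wig, abs_mul, abs_mul, abs_of_nonneg h3]
  calc |max 0 (1 - 2 * h)| * amp u h * |Real.sin (1 / h)| ≤ 1 * amp u h * 1 := by gcongr
    _ = amp u h := by ring

lemma abs_wig_le_one (u : C) {h : ℝ} (hh : 0 ≤ h) : |wig u h| ≤ 1 :=
  (abs_wig_le_amp u hh).trans (amp_le_one u hh)

lemma wig_continuousOn : ContinuousOn (fun z : C × ℝ => wig z.1 z.2) {z | 0 < z.2} := by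
  refine ContinuousOn.mul (ContinuousOn.mul ?_ amp_continuousOn) ?_
  · exact (by fun_prop : Continuous fun z : C × ℝ => max 0 (1 - 2 * z.2)).continuousOn
  · refine Real.continuous_sin.comp_continuousOn (continuousOn_const.div continuousOn_snd ?_)
    exact fun z hz => ne_of_gt hz

lemma wig_eq_zero (u : C) {h : ℝ} (hh : 1 / 2 ≤ h) : wig u h = 0 := by
  rw [wig, max_eq_left (by linarith)]; ring

lemma mul_wig_continuous : Continuous fun z : C × ℝ => max z.2 0 * wig z.1 (max z.2 0) := by
  rw [continuous_iff_continuousAt]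
  rintro ⟨u, h⟩
  rcases lt_or_ge 0 h with hh | hh
  · have ho : IsOpen {z : C × ℝ | 0 < z.2} := isOpen_lt continuous_const continuous_snd
    have h1 : ContinuousAt (fun z : C × ℝ => z.2 * wig z.1 z.2) (u, h) :=
      (continuousOn_snd.mul wig_continuousOn).continuousAt (ho.mem_nhds hh)
    refine h1.congr ?_
    filter_upwards [ho.mem_nhds hh] with z hz
    rw [max_eq_left (le_of_lt hz)]
  · have h0 : max h 0 = 0 := max_eq_right hh
    have hcont : Continuous fun z : C × ℝ => max z.2 0 := by fun_prop
    have h1 : Tendsto (fun z : C × ℝ => max z.2 0) (𝓝 (u, h)) (𝓝 0) := by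
      simpa [h0] using hcont.tendsto (u, h)
    rw [ContinuousAt]
    simp only [h0, zero_mul]
    refine squeeze_zero_norm (fun z => ?_) h1
    rw [Real.norm_eq_abs, abs_mul, abs_of_nonneg (le_max_right z.2 0)]
    exact mul_le_of_le_one_right (le_max_right _ _) (abs_wig_le_one _ (le_max_right _ _))

/-- The second coordinate of the edge `p` at height `h > 0`. -/
noncomputable def upper (e : C → ℝ) (p : Q) (h : ℝ) : ℝ := h * e p.2.1 + wig p.2.2 h

/-- The union of the edges indexed by `P`. At height `h = v 2` with `|h| < 1` the edge `p` is
singled out by `v 0 = (1 - |h|) * m p`. Below height `0` the edge is a straight segment to the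
vertex `(0, e x, -1)`, above it oscillates on its way to the vertex `(0, e y, 1)`, and at height `0`
it contains a whole segment, on which the oscillation may accumulate. -/
def carrier (e : C → ℝ) (m : Q → ℝ) (P : Set Q) : Set (Fin 3 → ℝ) :=
  {v | ∃ p ∈ P, -1 ≤ v 2 ∧ v 2 ≤ 1 ∧ |v 1| ≤ 2 ∧ v 0 = (1 - |v 2|) * m p ∧
    (v 2 < 0 → v 1 = -v 2 * e p.1) ∧ (0 < v 2 → v 1 = upper e p (v 2))}

lemma carrier_compact {e : C → ℝ} (he : Continuous e) {m : Q → ℝ} (hm : Continuous m)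
    {P : Set Q} (hP : IsClosed P) : IsCompact (carrier e m P) := by
  let T : Set (Q × ℝ × ℝ) := (P ×ˢ Icc (-2) 2 ×ˢ Icc (-1) 1) ∩
    (({z | 0 ≤ z.2.2} ∪ {z | z.2.1 = -z.2.2 * e z.1.1}) ∩
      {z | max z.2.2 0 * z.2.1 = max z.2.2 0 * (max z.2.2 0 * e z.1.2.1) +
        max z.2.2 0 * wig z.1.2.2 (max z.2.2 0)})
  have hT : IsCompact T := by
    refine (hP.isCompact.prod (isCompact_Icc.prod isCompact_Icc)).inter_right ?_
    refine IsClosed.inter (IsClosed.union ?_ ?_) ?_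
    · exact isClosed_le (by fun_prop) (by fun_prop)
    · exact isClosed_eq (by fun_prop) (by fun_prop)
    · refine isClosed_eq (by fun_prop) (Continuous.add (by fun_prop) ?_)
      exact mul_wig_continuous.comp
        (by fun_prop : Continuous fun z : Q × ℝ × ℝ => (z.1.2.2, z.2.2))
  have himg : carrier e m P =
      (fun z : Q × ℝ × ℝ => ![(1 - |z.2.2|) * m z.1, z.2.1, z.2.2]) '' T := by
    ext v
    constructor
    · rintro ⟨p, hp, h1, h2, h3, h4, h5, h6⟩
      refine ⟨(p, v 1, v 2), ⟨⟨hp, abs_le.1 h3, h1, h2⟩, ?_, ?_⟩, ?_⟩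
      · rcases lt_or_ge (v 2) 0 with h | h
        · exact Or.inr (h5 h)
        · exact Or.inl h
      · rcases lt_or_ge 0 (v 2) with h | h
        · simp only [mem_ofPred_eq, max_eq_left h.le, h6 h, upper]; ring
        · simp [max_eq_right h]
      · ext i; fin_cases i <;> simp [h4]
    · rintro ⟨⟨p, s, h⟩, ⟨⟨hp, hs, hh1, hh2⟩, hlo, hup⟩, rfl⟩
      refine ⟨p, hp, hh1, hh2, abs_le.2 hs, rfl, fun hneg => ?_, fun hpos => ?_⟩
      · rcases hlo with h' | h'
        · exact absurd hneg (not_lt.2 h')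
        · exact h'
      · have hpos' : 0 < h := hpos
        simp only [mem_ofPred_eq, max_eq_left hpos'.le, ← mul_add] at hup
        exact mul_left_cancel₀ hpos'.ne' hup
  rw [himg]
  refine hT.image (continuous_pi fun i => ?_)
  fin_cases i <;> simp <;> fun_prop

/-- The point of the lower layer `{v | v 2 = -1}` representing `x`. -/
def vtx (e : C → ℝ) (x : C) : Fin 3 → ℝ := ![0, e x, -1]

/-- The point at height `h ≤ 0` of the edge `p`. -/
def lowPt (e : C → ℝ) (m : Q → ℝ) (p : Q) (h : ℝ) : Fin 3 → ℝ := ![(1 + h) * m p, -h * e p.1, h]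

/-- The point at height `h > 0` of the edge `p`. -/
noncomputable def upPt (e : C → ℝ) (m : Q → ℝ) (p : Q) (h : ℝ) : Fin 3 → ℝ :=
  ![(1 - h) * m p, upper e p h, h]

section Joining

variable {e : C → ℝ} {m : Q → ℝ} {P : Set Q}

lemma lowPt_mem (hb : ∀ x, 0 ≤ e x ∧ e x ≤ 1) {p : Q} (hp : p ∈ P) {h : ℝ} (h1 : -1 ≤ h)
    (h2 : h ≤ 0) : lowPt e m p h ∈ carrier e m P := by
  refine ⟨p, hp, h1, h2.trans zero_le_one, ?_, ?_, fun _ => rfl, fun hpos => ?_⟩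
  · have := hb p.1
    change |-h * e p.1| ≤ 2
    rw [abs_le]
    constructor <;> nlinarith
  · change (1 + h) * m p = (1 - |h|) * m p
    rw [abs_of_nonpos h2]; ring
  · exact absurd hpos (not_lt.2 h2)

lemma midPt_mem {p : Q} (hp : p ∈ P) {s : ℝ} (hs : |s| ≤ 2) : ![m p, s, 0] ∈ carrier e m P :=
  ⟨p, hp, by simp, by simp, by simpa using hs, by simp, by simp, by simp⟩

lemma upPt_mem (hb : ∀ x, 0 ≤ e x ∧ e x ≤ 1) {p : Q} (hp : p ∈ P) {h : ℝ} (h1 : 0 < h)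
    (h2 : h ≤ 1) : upPt e m p h ∈ carrier e m P := by
  refine ⟨p, hp, by change -1 ≤ h; linarith, h2, ?_, ?_, fun hneg => ?_, fun _ => rfl⟩
  · have h3 := hb p.2.1
    have h4 := abs_le.1 (abs_wig_le_one p.2.2 h1.le)
    change |h * e p.2.1 + wig p.2.2 h| ≤ 2
    rw [abs_le]
    constructor <;> nlinarith
  · change (1 - h) * m p = (1 - |h|) * m p
    rw [abs_of_pos h1]
  · exact absurd hneg (not_lt.2 h1.le)

/-- Every point of the carrier lies on the lower part, the middle segment or the upper part of an
edge. -/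
lemma carrier_cases {v : Fin 3 → ℝ} (hv : v ∈ carrier e m P) : ∃ p ∈ P,
    (∃ h, -1 ≤ h ∧ h < 0 ∧ v = lowPt e m p h) ∨ (∃ s, |s| ≤ 2 ∧ v = ![m p, s, 0]) ∨
      (∃ h, 0 < h ∧ h ≤ 1 ∧ v = upPt e m p h) := by
  obtain ⟨p, hp, h1, h2, h3, h4, h5, h6⟩ := hv
  refine ⟨p, hp, ?_⟩
  rcases lt_trichotomy (v 2) 0 with h | h | h
  · refine Or.inl ⟨v 2, h1, h, ?_⟩
    rw [abs_of_neg h] at h4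
    ext i; fin_cases i <;> simp [lowPt, h4, h5 h]
  · refine Or.inr (Or.inl ⟨v 1, h3, ?_⟩)
    rw [h] at h4
    ext i; fin_cases i <;> simp [h4, h]
  · refine Or.inr (Or.inr ⟨v 2, h, h2, ?_⟩)
    rw [abs_of_pos h] at h4
    ext i; fin_cases i <;> simp [upPt, h4, h6 h]

lemma joinedIn_low (hb : ∀ x, 0 ≤ e x ∧ e x ≤ 1) {p : Q} (hp : p ∈ P) {h : ℝ} (h1 : -1 ≤ h)
    (h2 : h ≤ 0) : JoinedIn (carrier e m P) (lowPt e m p h) (vtx e p.1) := by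
  have hpc : IsPathConnected (lowPt e m p '' Icc (-1) 0) := by
    refine ((convex_Icc (-1 : ℝ) 0).isPathConnected ⟨0, by simp⟩).image ?_
    refine continuous_pi fun i => ?_
    fin_cases i <;> simp [lowPt] <;> fun_prop
  have hend : vtx e p.1 = lowPt e m p (-1) := by
    ext i; fin_cases i <;> simp [vtx, lowPt]
  rw [hend]
  refine (hpc.joinedIn _ (mem_image_of_mem _ ⟨h1, h2⟩) _
    (mem_image_of_mem _ ⟨le_rfl, by norm_num⟩)).mono ?_
  rintro _ ⟨k, hk, rfl⟩
  exact lowPt_mem hb hp hk.1 hk.2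

lemma joinedIn_mid (hb : ∀ x, 0 ≤ e x ∧ e x ≤ 1) {p : Q} (hp : p ∈ P) {s : ℝ} (hs : |s| ≤ 2) :
    JoinedIn (carrier e m P) ![m p, s, 0] (vtx e p.1) := by
  refine JoinedIn.trans ?_ (joinedIn_low (m := m) hb hp (by norm_num : (-1 : ℝ) ≤ 0) le_rfl)
  have hpc : IsPathConnected ((fun s : ℝ => ![m p, s, 0]) '' Icc (-2) 2) := by
    refine ((convex_Icc (-2 : ℝ) 2).isPathConnected ⟨0, by simp⟩).image ?_
    refine continuous_pi fun i => ?_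
    fin_cases i <;> simp <;> fun_prop
  have hend : lowPt e m p 0 = (fun s : ℝ => ![m p, s, 0]) 0 := by
    ext i; fin_cases i <;> simp [lowPt]
  rw [hend]
  refine (hpc.joinedIn _ (mem_image_of_mem _ (abs_le.1 hs)) _
    (mem_image_of_mem _ ⟨by norm_num, by norm_num⟩)).mono ?_
  rintro _ ⟨k, hk, rfl⟩
  exact midPt_mem hp (abs_le.2 hk)

lemma upper_continuousOn (p : Q) : ContinuousOn (upper e p) (Ioi 0) := by
  refine ContinuousOn.add (by fun_prop) ?_
  exact wig_continuousOn.comp (f := fun h : ℝ => (p.2.2, h)) (by fun_prop) fun h hh => hh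

lemma joinedIn_up (hb : ∀ x, 0 ≤ e x ∧ e x ≤ 1) {p : Q} (hp : p ∈ P) {h : ℝ} (h1 : 0 < h)
    (h2 : h ≤ 1) : JoinedIn (carrier e m P) (upPt e m p h) ![0, e p.2.1, 1] := by
  have hpc : IsPathConnected (upPt e m p '' Ioc 0 1) := by
    refine ((convex_Ioc (0 : ℝ) 1).isPathConnected ⟨1, by simp⟩).image' ?_
    refine continuousOn_pi.2 fun i => ?_
    fin_cases i
    · simp [upPt]; fun_prop
    · simpa [upPt] using (upper_continuousOn p).mono fun h hh => hh.1
    · simp [upPt]; fun_prop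
  have hend : ![0, e p.2.1, 1] = upPt e m p 1 := by
    ext i; fin_cases i <;> simp [upPt, upper, wig_eq_zero p.2.2 (by norm_num : (1 : ℝ) / 2 ≤ 1)]
  rw [hend]
  refine (hpc.joinedIn _ (mem_image_of_mem _ ⟨h1, h2⟩) _
    (mem_image_of_mem _ ⟨by norm_num, le_rfl⟩)).mono ?_
  rintro _ ⟨k, hk, rfl⟩
  exact upPt_mem hb hp hk.1 hk.2

/-- Along a good edge the oscillation dies out, so the edge is traversed by a path. -/
lemma joinedIn_good (hb : ∀ x, 0 ≤ e x ∧ e x ≤ 1) {p : Q} (hp : p ∈ P) (hg : Good p.2.2) :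
    JoinedIn (carrier e m P) ![0, e p.2.1, 1] (vtx e p.1) := by
  have hw : Tendsto (wig p.2.2) (𝓝[>] 0) (𝓝 0) := by
    refine squeeze_zero_norm' ?_ (amp_tendsto hg)
    filter_upwards [self_mem_nhdsWithin] with h hh
    exact abs_wig_le_amp _ (le_of_lt hh)
  have hu0 : upper e p 0 = 0 := by simp [upper, wig]
  have hcont : ContinuousOn (upper e p) (Icc 0 1) := by
    intro h hh
    rcases hh.1.eq_or_lt with rfl | hpos
    · have h1 : Tendsto (upper e p) (𝓝[>] 0) (𝓝 (upper e p 0)) := by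
        have h2 : Tendsto (fun h : ℝ => h * e p.2.1) (𝓝[>] 0) (𝓝 (0 * e p.2.1)) :=
          ((by fun_prop : Continuous fun h : ℝ => h * e p.2.1).tendsto 0).mono_left
            nhdsWithin_le_nhds
        rw [hu0]
        have h3 := h2.add hw
        rw [zero_mul, add_zero] at h3
        exact h3
      have h3 : ContinuousWithinAt (upper e p) (Ioi 0) 0 := h1
      exact (continuousWithinAt_Ioi_iff_Ici.1 h3).mono fun k hk => hk.1
    · exact ((upper_continuousOn p).continuousAt (Ioi_mem_nhds hpos)).continuousWithinAt
  have hpc : IsPathConnected (upPt e m p '' Icc 0 1) := by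
    refine ((convex_Icc (0 : ℝ) 1).isPathConnected ⟨1, by simp⟩).image' ?_
    refine continuousOn_pi.2 fun i => ?_
    fin_cases i
    · simp [upPt]; fun_prop
    · simpa [upPt] using hcont
    · simp [upPt]; fun_prop
  have hend : ![0, e p.2.1, 1] = upPt e m p 1 := by
    ext i; fin_cases i <;> simp [upPt, upper, wig_eq_zero p.2.2 (by norm_num : (1 : ℝ) / 2 ≤ 1)]
  have hstart : upPt e m p 0 = ![m p, 0, 0] := by
    ext i; fin_cases i <;> simp [upPt, hu0]
  refine JoinedIn.trans ?_ (joinedIn_mid hb hp (s := 0) (by simp))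
  rw [hend, ← hstart]
  refine (hpc.joinedIn _ (mem_image_of_mem _ ⟨by norm_num, le_rfl⟩) _
    (mem_image_of_mem _ ⟨le_rfl, by norm_num⟩)).mono ?_
  rintro _ ⟨k, hk, rfl⟩
  rcases hk.1.eq_or_lt with rfl | hpos
  · rw [hstart]; exact midPt_mem hp (by simp)
  · exact upPt_mem hb hp hpos hk.2

end Joining

/-! ### The reduction to the given relation -/

/-- Sends the part at height `≤ 0` of an edge from `x` to `y` to `x` and the part at height `> 0`
to `y`. Here `e'` and `m'` stand for left inverses of `e` and `m`. -/
noncomputable def retr (e' : ℝ → C) (m' : ℝ → Q) (v : Fin 3 → ℝ) : C :=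
  if v 2 < 0 then e' (v 1 / -v 2) else if v 2 = 0 then (m' (v 0)).1 else
    if v 2 < 1 then (m' (v 0 / (1 - v 2))).2.1 else e' (v 1)

lemma retr_measurable {e' : ℝ → C} {m' : ℝ → Q} (he : Measurable e') (hm : Measurable m') :
    Measurable (retr e' m') := by
  unfold retr
  refine Measurable.ite (measurableSet_lt (by fun_prop) (by fun_prop)) (by fun_prop) ?_
  refine Measurable.ite (measurableSet_eq_fun (by fun_prop) (by fun_prop)) (by fun_prop) ?_
  exact Measurable.ite (measurableSet_lt (by fun_prop) (by fun_prop)) (by fun_prop) (by fun_prop)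

section Retraction

variable {e : C → ℝ} {m : Q → ℝ} {P : Set Q} {e' : ℝ → C} {m' : ℝ → Q}

lemma retr_low (he' : ∀ x, e' (e x) = x) (p : Q) {h : ℝ} (hh : h < 0) :
    retr e' m' (lowPt e m p h) = p.1 := by
  have h1 : -h * e p.1 / -h = e p.1 := mul_div_cancel_left₀ _ (neg_pos.2 hh).ne'
  have h2 : lowPt e m p h 2 < 0 := hh
  rw [retr, if_pos h2]
  change e' (-h * e p.1 / -h) = p.1
  rw [h1, he']

lemma retr_mid (hm' : ∀ p, m' (m p) = p) (p : Q) (s : ℝ) :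
    retr e' m' ![m p, s, 0] = p.1 := by
  simp [retr, hm']

lemma retr_up (he' : ∀ x, e' (e x) = x) (hm' : ∀ p, m' (m p) = p) (p : Q) {h : ℝ} (h1 : 0 < h)
    (h2 : h ≤ 1) : retr e' m' (upPt e m p h) = p.2.1 := by
  have h3 : ¬ upPt e m p h 2 < 0 := not_lt.2 h1.le
  have h4 : ¬ upPt e m p h 2 = 0 := h1.ne'
  rw [retr, if_neg h3, if_neg h4]
  rcases h2.lt_or_eq with hlt | rfl
  · have h5 : upPt e m p h 2 < 1 := hlt
    rw [if_pos h5]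
    change (m' ((1 - h) * m p / (1 - h))).2.1 = p.2.1
    rw [mul_div_cancel_left₀ _ (by linarith : 1 - h ≠ 0), hm']
  · have h5 : ¬ upPt e m p 1 2 < 1 := lt_irrefl _
    rw [if_neg h5]
    change e' (upper e p 1) = p.2.1
    rw [upper, wig_eq_zero _ (by norm_num), one_mul, add_zero, he']

/-- Below height `0` the value of `retr` can be read off the slope of the edge. -/
lemma retr_neg (he' : ∀ x, e' (e x) = x) {v : Fin 3 → ℝ} (hv : v ∈ carrier e m P)
    (hneg : v 2 < 0) : v 1 / -v 2 = e (retr e' m' v) := by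
  obtain ⟨p, hp, ⟨h, h1, h2, rfl⟩ | ⟨s, hs, rfl⟩ | ⟨h, h1, h2, rfl⟩⟩ := carrier_cases hv
  · rw [retr_low he' p h2]
    exact mul_div_cancel_left₀ _ (neg_pos.2 h2).ne'
  · exact absurd hneg (lt_irrefl _)
  · exact absurd hneg (not_lt.2 h1.le)

/-- Above height `1 / 2` the value of `retr` can be read off the slope of the edge. -/
lemma retr_half (he' : ∀ x, e' (e x) = x) (hm' : ∀ p, m' (m p) = p) {v : Fin 3 → ℝ}
    (hv : v ∈ carrier e m P) (hpos : 1 / 2 < v 2) : v 1 / v 2 = e (retr e' m' v) := by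
  obtain ⟨p, hp, ⟨h, h1, h2, rfl⟩ | ⟨s, hs, rfl⟩ | ⟨h, h1, h2, rfl⟩⟩ := carrier_cases hv
  · have : 1 / 2 < h := hpos
    linarith
  · have : (1 / 2 : ℝ) < 0 := hpos
    linarith
  · have h3 : 1 / 2 < h := hpos
    rw [retr_up he' hm' p h1 h2]
    change upper e p h / h = e p.2.1
    rw [upper, wig_eq_zero _ h3.le, add_zero]
    exact mul_div_cancel_left₀ _ h1.ne'

/-- Strictly between the two outer layers, the edge through a point is determined by the point. -/
lemma retr_inner (he' : ∀ x, e' (e x) = x) (hm' : ∀ p, m' (m p) = p) {v : Fin 3 → ℝ}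
    (hv : v ∈ carrier e m P) (h1 : -1 < v 2) (h2 : v 2 < 1) :
    ∃ p ∈ P, m' (v 0 / (1 - |v 2|)) = p ∧ v 0 / (1 - |v 2|) = m p ∧
      (v 2 ≤ 0 → retr e' m' v = p.1) ∧
      (0 < v 2 → retr e' m' v = p.2.1 ∧ v 1 = upper e p (v 2)) := by
  have key : ∀ p, v 0 = (1 - |v 2|) * m p → v 0 / (1 - |v 2|) = m p := fun p hp => by
    have : (1 - |v 2|) ≠ 0 := by
      have := abs_lt.2 ⟨h1, h2⟩
      linarith
    rw [hp, mul_div_cancel_left₀ _ this]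
  obtain ⟨p, hp, H⟩ := carrier_cases hv
  refine ⟨p, hp, ?_⟩
  suffices hs : v 0 = (1 - |v 2|) * m p ∧ (v 2 ≤ 0 → retr e' m' v = p.1) ∧
      (0 < v 2 → retr e' m' v = p.2.1 ∧ v 1 = upper e p (v 2)) by
    refine ⟨?_, key p hs.1, hs.2⟩
    rw [key p hs.1, hm']
  obtain ⟨h, hh1, hh2, rfl⟩ | ⟨s, hs, rfl⟩ | ⟨h, hh1, hh2, rfl⟩ := H
  · refine ⟨?_, fun _ => retr_low he' p hh2, fun hpos => absurd hpos (not_lt.2 hh2.le)⟩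
    change (1 + h) * m p = (1 - |h|) * m p
    rw [abs_of_neg hh2]; ring
  · refine ⟨?_, fun _ => retr_mid hm' p s, fun hpos => absurd hpos (lt_irrefl _)⟩
    simp
  · refine ⟨?_, fun hneg => absurd hneg (not_le.2 hh1), fun _ => ⟨retr_up he' hm' p hh1 hh2, rfl⟩⟩
    change (1 - h) * m p = (1 - |h|) * m p
    rw [abs_of_pos hh1]

end Retraction

/-! ### Paths respect the relation -/

/-- Along a bad edge the second coordinate takes values a fixed distance apart at arbitrarily small
positive heights. -/
lemma upper_oscillates {e : C → ℝ} (hb : ∀ x, 0 ≤ e x ∧ e x ≤ 1) {p : Q} (hbad : ¬ Good p.2.2) :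
    ∃ c > 0, ∀ h₁ > 0, ∃ a b, 0 < a ∧ a < h₁ ∧ 0 < b ∧ b < h₁ ∧
      upper e p b + c ≤ upper e p a := by
  obtain ⟨c, hc, hamp⟩ := amp_lower hbad
  refine ⟨c / 2, by positivity, fun h₁ hh₁ => ?_⟩
  obtain ⟨N, hN⟩ := exists_nat_gt (max (1 / h₁) (max 4 (2 / c)))
  have hN1 : 1 / h₁ < N := (le_max_left _ _).trans_lt hN
  have hN2 : (4 : ℝ) < N := (le_max_left _ _).trans_lt ((le_max_right _ _).trans_lt hN)
  have hN3 : 2 / c < N := (le_max_right _ _).trans_lt ((le_max_right _ _).trans_lt hN)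
  have hpi := Real.pi_gt_three
  have small : ∀ z : ℝ, (N : ℝ) ≤ z → 0 < 1 / z ∧ 1 / z < h₁ ∧ 1 / z < 1 / 4 ∧ 1 / z < c / 2 := by
    intro z hz
    have hz0 : 0 < z := by linarith
    refine ⟨by positivity, ?_, ?_, ?_⟩
    · rw [div_lt_iff₀ hh₁] at hN1
      rw [div_lt_iff₀ hz0]; nlinarith
    · rw [div_lt_iff₀ hz0]; linarith
    · rw [div_lt_iff₀ hc] at hN3
      rw [div_lt_iff₀ hz0]; nlinarith
  have big : ∀ z : ℝ, (N : ℝ) ≤ z → c / 2 ≤ max 0 (1 - 2 * (1 / z)) * amp p.2.2 (1 / z) := by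
    intro z hz
    obtain ⟨h1, -, h3, -⟩ := small z hz
    have h4 := hamp _ h1
    have h5 : 1 / 2 ≤ max 0 (1 - 2 * (1 / z)) := le_max_of_le_right (by linarith)
    nlinarith
  have hNpi : (N : ℝ) ≤ N * (2 * Real.pi) := by nlinarith
  have hza : (N : ℝ) ≤ Real.pi / 2 + N * (2 * Real.pi) := by linarith
  have hzb : (N : ℝ) ≤ -(Real.pi / 2) + ((N + 1 : ℕ) : ℝ) * (2 * Real.pi) := by
    push_cast; nlinarith
  obtain ⟨a1, a2, -, a4⟩ := small _ hza
  obtain ⟨b1, b2, -, b4⟩ := small _ hzb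
  refine ⟨_, _, a1, a2, b1, b2, ?_⟩
  have ga := big _ hza
  have gb := big _ hzb
  have hya := hb p.2.1
  unfold upper wig
  rw [one_div_one_div, one_div_one_div, Real.sin_add_nat_mul_two_pi, Real.sin_add_nat_mul_two_pi,
    Real.sin_neg, Real.sin_pi_div_two]
  have e1 : 0 ≤ 1 / (Real.pi / 2 + N * (2 * Real.pi)) * e p.2.1 := mul_nonneg a1.le hya.1
  have e2 : 1 / (-(Real.pi / 2) + ((N + 1 : ℕ) : ℝ) * (2 * Real.pi)) * e p.2.1 ≤ c / 2 :=
    (mul_le_of_le_one_right b1.le hya.2).trans b4.le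
  linarith

section Paths

variable {e : C → ℝ} {m : Q → ℝ} {P : Set Q} {e' : ℝ → C} {m' : ℝ → Q} {E : C → C → Prop}

/-- The `E`-class of `retr` is locally constant along a path in the carrier. -/
lemma retr_locally (hE : Equivalence E) (hec : Continuous e) (hei : Function.Injective e)
    (hb : ∀ x, 0 ≤ e x ∧ e x ≤ 1) (hmc : Continuous m) (hmi : Function.Injective m)
    (he' : ∀ x, e' (e x) = x) (hm' : ∀ p, m' (m p) = p)
    (hP : ∀ p ∈ P, Good p.2.2 → E p.1 p.2.1) {γ : ℝ → Fin 3 → ℝ} (hγ : Continuous γ)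
    (hmem : ∀ t, γ t ∈ carrier e m P) (t₀ : ℝ) :
    ∀ᶠ t in 𝓝 t₀, E (retr e' m' (γ t)) (retr e' m' (γ t₀)) := by
  have hc : ∀ i, Continuous fun t => γ t i := fun i => (continuous_apply i).comp hγ
  have hle : ∀ t, -1 ≤ γ t 2 ∧ γ t 2 ≤ 1 := fun t => by
    obtain ⟨p, -, h1, h2, -⟩ := hmem t
    exact ⟨h1, h2⟩
  have of_eq : ∀ {x y}, x = y → E x y := fun h => h ▸ hE.refl _
  rcases lt_or_ge (γ t₀ 2) 0 with hneg | hnn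
  · have hV : IsOpen {t | γ t 2 < 0} := isOpen_lt (hc 2) continuous_const
    refine (eventually_const hec hei (f := fun t => γ t 1 / -γ t 2) hV ?_
      (fun t ht => retr_neg (m' := m') he' (hmem t) ht) hneg).mono fun t ht => of_eq ht
    exact (hc 1).continuousOn.div (hc 2).neg.continuousOn fun t ht => (neg_pos.2 ht).ne'
  rcases lt_or_ge (1 / 2) (γ t₀ 2) with hbig | hsm
  · have hV : IsOpen {t | 1 / 2 < γ t 2} := isOpen_lt continuous_const (hc 2)
    refine (eventually_const hec hei (f := fun t => γ t 1 / γ t 2) hV ?_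
      (fun t ht => retr_half (m' := m') he' hm' (hmem t) ht) hbig).mono fun t ht => of_eq ht
    refine (hc 1).continuousOn.div (hc 2).continuousOn fun t ht => ?_
    have : 1 / 2 < γ t 2 := ht
    linarith
  -- At heights in `[0, 1 / 2]` the path stays on a single edge `p` for a while.
  have hV : IsOpen {t | -1 < γ t 2 ∧ γ t 2 < 1} :=
    (isOpen_lt continuous_const (hc 2)).inter (isOpen_lt (hc 2) continuous_const)
  have ht₀ : t₀ ∈ {t | -1 < γ t 2 ∧ γ t 2 < 1} := ⟨by linarith, by linarith⟩
  have hconst := eventually_const hmc hmi (f := fun t => γ t 0 / (1 - |γ t 2|))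
    (q := fun t => m' (γ t 0 / (1 - |γ t 2|))) hV
    ((hc 0).continuousOn.div (continuous_const.sub (hc 2).abs).continuousOn fun t ht => by
      have := abs_lt.2 ht
      linarith)
    (fun t ht => by
      obtain ⟨p, -, h1, h2, -⟩ := retr_inner he' hm' (hmem t) ht.1 ht.2
      rw [h1, h2]) ht₀
  obtain ⟨p, hp, hp1, hp2, hp3, hp4⟩ := retr_inner he' hm' (hmem t₀) ht₀.1 ht₀.2
  simp only [hp1] at hconst
  have hinner : ∀ᶠ t in 𝓝 t₀, (γ t 2 ≤ 0 → retr e' m' (γ t) = p.1) ∧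
      (0 < γ t 2 → retr e' m' (γ t) = p.2.1 ∧ γ t 1 = upper e p (γ t 2)) := by
    filter_upwards [hconst, hV.mem_nhds ht₀] with t h1 h2
    obtain ⟨q, -, hq1, -, hq⟩ := retr_inner he' hm' (hmem t) h2.1 h2.2
    rw [← hq1, h1] at hq
    exact hq
  by_cases hg : Good p.2.2
  · have hxy := hP p hp hg
    have hcl : ∀ᶠ t in 𝓝 t₀, E (retr e' m' (γ t)) p.1 := by
      filter_upwards [hinner] with t ht
      rcases le_or_gt (γ t 2) 0 with h | h
      · exact of_eq (ht.1 h)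
      · rw [(ht.2 h).1]; exact hE.symm hxy
    have h0 := hcl.self_of_nhds
    exact hcl.mono fun t ht => hE.trans ht (hE.symm h0)
  rcases hnn.lt_or_eq with hpos | hzero
  · filter_upwards [hinner, (isOpen_lt continuous_const (hc 2)).mem_nhds hpos] with t h1 h2
    exact of_eq ((h1.2 h2).1.trans (hp4 hpos).1.symm)
  -- A path through height `0` on a bad edge cannot enter positive heights: by the intermediate
  -- value theorem it would follow all small oscillations while its second coordinate is nearly
  -- constant.
  obtain ⟨c, hcpos, hosc⟩ := upper_oscillates hb hg
  have hclose : ∀ᶠ t in 𝓝 t₀, γ t 1 ∈ Ioo (γ t₀ 1 - c / 2) (γ t₀ 1 + c / 2) :=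
    (hc 1).continuousAt.eventually (Ioo_mem_nhds (by linarith) (by linarith))
  obtain ⟨U, hUV, hU, htU, hUc⟩ :=
    locallyConnectedSpace_iff_subsets_isOpen_isConnected.1 inferInstance t₀ _ (hinner.and hclose)
  filter_upwards [hU.mem_nhds htU] with t₁ ht₁
  rw [hp3 hzero.symm.le]
  rcases le_or_gt (γ t₁ 2) 0 with h | h
  · exact of_eq ((hUV ht₁).1.1 h)
  exfalso
  obtain ⟨a, b, a1, a2, b1, b2, hab⟩ := hosc _ h
  have hivt : Icc (γ t₀ 2) (γ t₁ 2) ⊆ (fun t => γ t 2) '' U :=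
    hUc.isPreconnected.intermediate_value htU ht₁ (hc 2).continuousOn
  rw [← hzero] at hivt
  obtain ⟨ta, hta, hta2⟩ := hivt ⟨a1.le, a2.le⟩
  obtain ⟨tb, htb, htb2⟩ := hivt ⟨b1.le, b2.le⟩
  obtain ⟨⟨-, ha3⟩, ha4⟩ := hUV hta
  obtain ⟨⟨-, hb3⟩, hb4⟩ := hUV htb
  simp only at hta2 htb2
  rw [hta2] at ha3
  rw [htb2] at hb3
  have ha5 := (ha3 a1).2
  have hb5 := (hb3 b1).2
  linarith [ha4.2, hb4.1]

lemma retr_joinedIn (hE : Equivalence E) (hec : Continuous e) (hei : Function.Injective e)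
    (hb : ∀ x, 0 ≤ e x ∧ e x ≤ 1) (hmc : Continuous m) (hmi : Function.Injective m)
    (he' : ∀ x, e' (e x) = x) (hm' : ∀ p, m' (m p) = p)
    (hP : ∀ p ∈ P, Good p.2.2 → E p.1 p.2.1) {v w : Fin 3 → ℝ}
    (h : JoinedIn (carrier e m P) v w) : E (retr e' m' v) (retr e' m' w) := by
  obtain ⟨γ, hγ⟩ := h
  let S : Setoid C := ⟨E, hE⟩
  have hlc : IsLocallyConstant fun t : ℝ => Quotient.mk S (retr e' m' (γ.extend t)) := by
    rw [IsLocallyConstant.iff_eventually_eq]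
    intro t₀
    refine (retr_locally hE hec hei hb hmc hmi he' hm' hP γ.continuous_extend (fun t => ?_)
      t₀).mono fun t ht => Quotient.sound ht
    exact hγ _
  have := hlc.apply_eq_of_preconnectedSpace 0 1
  simp only [Path.extend_zero, Path.extend_one] at this
  exact Quotient.exact this

/-- A point of the carrier is joined to the lower vertex of its image under `retr`. -/
lemma joinedIn_vtx (hE : Equivalence E) (hb : ∀ x, 0 ≤ e x ∧ e x ≤ 1)
    (he' : ∀ x, e' (e x) = x) (hm' : ∀ p, m' (m p) = p)
    (hPE : ∀ x y, E x y → ∃ p ∈ P, Good p.2.2 ∧ p.1 = x ∧ p.2.1 = y) {v : Fin 3 → ℝ}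
    (hv : v ∈ carrier e m P) : JoinedIn (carrier e m P) v (vtx e (retr e' m' v)) := by
  obtain ⟨p, hp, ⟨h, h1, h2, rfl⟩ | ⟨s, hs, rfl⟩ | ⟨h, h1, h2, rfl⟩⟩ := carrier_cases hv
  · rw [retr_low he' p h2]
    exact joinedIn_low hb hp h1 h2.le
  · rw [retr_mid hm']
    exact joinedIn_mid hb hp hs
  · rw [retr_up he' hm' p h1 h2]
    refine (joinedIn_up hb hp h1 h2).trans ?_
    obtain ⟨q, hq, hg, hq1, hq2⟩ := hPE _ _ (hE.refl p.2.1)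
    have := joinedIn_good (m := m) hb hq hg
    rwa [hq1, hq2] at this

lemma joinedIn_vtx_vtx (hE : Equivalence E) (hb : ∀ x, 0 ≤ e x ∧ e x ≤ 1)
    (hPE : ∀ x y, E x y → ∃ p ∈ P, Good p.2.2 ∧ p.1 = x ∧ p.2.1 = y) {x y : C} (h : E x y) :
    JoinedIn (carrier e m P) (vtx e x) (vtx e y) := by
  obtain ⟨p, hp, hg, rfl, rfl⟩ := hPE _ _ h
  obtain ⟨q, hq, hg', hq1, hq2⟩ := hPE _ _ (hE.refl p.2.1)
  have h1 := joinedIn_good (m := m) hb hp hg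
  have h2 := joinedIn_good (m := m) hb hq hg'
  rw [hq1, hq2] at h2
  exact h1.symm.trans h2

end Paths

end Becker

/-- **Becker.** For every analytic equivalence relation `E` on Cantor space
there is a compact `K ⊆ ℝ³` whose path-connectedness relation (`Joined` in the subspace
topology) is Borel bireducible with `E`. -/
theorem becker_realization (E : (ℕ → Bool) → (ℕ → Bool) → Prop) (hE : Equivalence E)
    (hAnalytic : AnalyticSet {p : (ℕ → Bool) × (ℕ → Bool) | E p.1 p.2}) :
    ∃ K : Set (Fin 3 → ℝ), IsCompact K ∧
      BorelBireducible (fun x y : K => Joined x y) E := by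
  obtain ⟨P, hPc, hP, hPE⟩ := Becker.exists_edges hE hAnalytic
  obtain ⟨e, hec, hei, hb⟩ := Becker.exists_embedding_C
  obtain ⟨m, hmc, hmi⟩ := Becker.exists_embedding_Q
  obtain ⟨e', hem, he'⟩ := Becker.exists_leftInverse hec hei
  obtain ⟨m', hmm, hm'⟩ := Becker.exists_leftInverse hmc hmi
  refine ⟨Becker.carrier e m P, Becker.carrier_compact hec hmc hPc,
    ⟨fun v => Becker.retr e' m' v, (Becker.retr_measurable hem hmm).comp measurable_subtype_coe,
      fun v w => ?_⟩, ?_⟩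
  · refine (joinedIn_iff_joined v.2 w.2).symm.trans ?_
    refine ⟨Becker.retr_joinedIn hE hec hei hb hmc hmi he' hm' hP, fun h => ?_⟩
    exact (Becker.joinedIn_vtx hE hb he' hm' hPE v.2).trans
      ((Becker.joinedIn_vtx_vtx hE hb hPE h).trans (Becker.joinedIn_vtx hE hb he' hm' hPE w.2).symm)
  · have hvtx : ∀ x, Becker.vtx e x ∈ Becker.carrier e m P := fun x =>
      (Becker.joinedIn_vtx_vtx hE hb hPE (hE.refl x)).source_mem
    have hretr : ∀ x, Becker.retr e' m' (Becker.vtx e x) = x := fun x => by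
      simp [Becker.retr, Becker.vtx, he']
    refine ⟨fun x => ⟨Becker.vtx e x, hvtx x⟩, ?_, fun x y => ?_⟩
    · refine Continuous.measurable (Continuous.subtype_mk (continuous_pi fun i => ?_) _)
      fin_cases i <;> simp [Becker.vtx] <;> fun_prop
    · refine Iff.trans ?_ (joinedIn_iff_joined (hvtx x) (hvtx y))
      refine ⟨Becker.joinedIn_vtx_vtx hE hb hPE, fun h => ?_⟩
      have := Becker.retr_joinedIn hE hec hei hb hmc hmi he' hm' hP h
      rwa [hretr, hretr] at this
end

section
/- Let E be an equivalence relation on a Polish space X. Then for all x, y ∈ X, the one-letter words satisfy x F(E) y if and only if x E y; consequently, the map sending x ∈ X to the one-letter word x is a continuous injective reduction of E to F(E), so E continuously embeds into F(E). -/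
/-!
The homomorphism `F(X) → F(X/E)` induced by the quotient map `X → X/E` kills `x⁻¹y` whenever
`x E y`, hence kills `N_E`. If `x⁻¹y ∈ N_E`, the generators `[x]` and `[y]` of `F(X/E)` are
therefore equal, so `x E y`. The converse holds because `x⁻¹y` is a generator of `N_E`.
Continuity holds because the topology on `F(X)` is induced from the word space, in which
`x ↦ [(x, 1)]` is continuous.
-/

open MeasureTheory

/-- The reduced word of an element of the free group, an element of the word space
`W(X) = ⨆ₙ (X × {±1})ⁿ`. -/
noncomputable def reducedWord {X : Type*} (w : FreeGroup X) : List (X × Bool) :=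
  letI := Classical.decEq X
  w.toWord

/-- The topology on the free group `F(X)`, viewed as the space of reduced words inside
the word space `W(X) = ⨆ₙ (X × {±1})ⁿ`. -/
noncomputable instance FreeGroup.topologicalSpace' {X : Type*} [TopologicalSpace X] :
    TopologicalSpace (FreeGroup X) :=
  TopologicalSpace.induced reducedWord inferInstance

/-- The normal subgroup `N_E` of `F(X)` generated by `{x⁻¹y : x E y}`. -/
def NE {X : Type*} (E : X → X → Prop) : Subgroup (FreeGroup X) :=
  Subgroup.normalClosure {w | ∃ x y, E x y ∧ w = (FreeGroup.of x)⁻¹ * FreeGroup.of y}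

/-- The coset equivalence relation `F(E)` on the free group `F(X)`. -/
def FErel {X : Type*} (E : X → X → Prop) (u v : FreeGroup X) : Prop :=
  u⁻¹ * v ∈ NE E

theorem NE_le_ker_map_mk {X : Type*} (s : Setoid X) :
    NE s.r ≤ (FreeGroup.map (Quotient.mk s)).ker := by
  apply Subgroup.normalClosure_le_normal
  rintro w ⟨x, y, h, rfl⟩
  have h' : Quotient.mk s x = Quotient.mk s y := Quotient.sound h
  simp [MonoidHom.mem_ker, h']

theorem FErel_of_iff {X : Type*} {E : X → X → Prop} (hE : Equivalence E) (x y : X) :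
    FErel E (FreeGroup.of x) (FreeGroup.of y) ↔ E x y := by
  constructor
  · intro h
    have h' := NE_le_ker_map_mk ⟨E, hE⟩ h
    rw [MonoidHom.mem_ker, map_mul, map_inv, inv_mul_eq_one, FreeGroup.map.of,
      FreeGroup.map.of] at h'
    exact Quotient.exact (s := ⟨E, hE⟩) (FreeGroup.of_injective h')
  · intro h
    exact Subgroup.subset_normalClosure ⟨x, y, h, rfl⟩

theorem continuous_freeGroup_of {X : Type*} [TopologicalSpace X] :
    Continuous (fun x : X => FreeGroup.of x) := by
  refine continuous_induced_rng.2 ?_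
  have h : reducedWord ∘ (fun x : X => FreeGroup.of x) = fun x => [(x, true)] := by
    funext x
    simp [reducedWord]
  rw [h]
  refine continuous_iff_continuousAt.2 fun x => ?_
  have hx : Filter.Tendsto (fun z : X => (z, true)) (nhds x) (nhds (x, true)) :=
    (Continuous.prodMk_left true).tendsto x
  exact hx.cons tendsto_const_nhds

/-- For an equivalence relation `E` on a Polish space `X`, one-letter
words satisfy `x F(E) y ↔ x E y`, and `x ↦ x` is a continuous injective reduction of `E`
to `F(E)`; hence `E` continuously embeds into `F(E)`. -/
theorem of_is_continuous_embedding_reduction {X : Type*} [TopologicalSpace X] [PolishSpace X]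
    (E : X → X → Prop) (hE : Equivalence E) :
    (∀ x y : X, FErel E (FreeGroup.of x) (FreeGroup.of y) ↔ E x y) ∧
    Continuous (fun x : X => FreeGroup.of x) ∧
    Function.Injective (FreeGroup.of : X → FreeGroup X) ∧
    (∀ x y : X, E x y ↔ FErel E (FreeGroup.of x) (FreeGroup.of y)) := by
  exact ⟨FErel_of_iff hE, continuous_freeGroup_of, FreeGroup.of_injective,
    fun x y => (FErel_of_iff hE x y).symm⟩
end

section
/- Let E be an equivalence relation on a set X and let F'(X) ⊆ F(X) consist of the reduced words containing no subword of the form x y⁻¹ or x⁻¹ y with x E y. Then for u = x₁^{ε₁} ⋯ x_m^{ε_m} and v = y₁^{δ₁} ⋯ y_n^{δ_n} in F'(X), u F(E) v if and only if m = n and for every i ≤ m, x_i E y_i and ε_i = δ_i. -/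
/-- `F'(X)`: reduced words with no subword of the form `x y⁻¹` or `x⁻¹ y` with `x E y`,
i.e. no two consecutive letters with `E`-related bases and opposite signs. -/
def Fprime {X : Type*} (E : X → X → Prop) : Set (FreeGroup X) :=
  {w | (reducedWord w).Chain' fun p q => ¬ (E p.1 q.1 ∧ p.2 ≠ q.2)}

theorem NE_eq_ker_map {X : Type*} (s : Setoid X) :
    NE s.r = (FreeGroup.map (Quotient.mk s)).ker := by
  apply le_antisymm
  · refine Subgroup.normalClosure_le_normal ?_
    rintro _ ⟨x, y, hxy, rfl⟩
    have h : Quotient.mk s x = Quotient.mk s y := Quotient.sound hxy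
    simp [MonoidHom.mem_ker, h]
  · intro w hw
    have : (NE s.r).Normal := Subgroup.normalClosure_normal
    have key : (QuotientGroup.mk' (NE s.r)).comp
        ((FreeGroup.map Quotient.out).comp (FreeGroup.map (Quotient.mk s))) =
        QuotientGroup.mk' (NE s.r) := by
      ext x
      simp only [MonoidHom.comp_apply, FreeGroup.map.of, QuotientGroup.mk'_apply]
      exact QuotientGroup.eq.2
        (Subgroup.subset_normalClosure ⟨_, _, Quotient.mk_out (s := s) x, rfl⟩)
    have h := DFunLike.congr_fun key w
    rw [MonoidHom.mem_ker] at hw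
    simp only [MonoidHom.comp_apply, hw, map_one] at h
    exact (QuotientGroup.eq_one_iff w).1 h.symm

/-- For a word in `F'(X)`, the letterwise image in `X/E` is already reduced. -/
theorem reducedWord_map_of_mem_Fprime {X : Type*} (s : Setoid X) {w : FreeGroup X}
    (hw : w ∈ Fprime s.r) :
    reducedWord (FreeGroup.map (Quotient.mk s) w) =
      (reducedWord w).map fun p => (Quotient.mk s p.1, p.2) := by
  have hred : FreeGroup.IsReduced ((reducedWord w).map fun p => (Quotient.mk s p.1, p.2)) := by
    rw [FreeGroup.IsReduced, List.isChain_map]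
    refine List.IsChain.imp (fun p q h hpq => ?_) hw
    by_contra hne
    exact h ⟨Quotient.exact hpq, hne⟩
  have hmk : FreeGroup.mk (reducedWord w) = w := @FreeGroup.mk_toWord _ (Classical.decEq X) w
  conv_lhs => rw [← hmk, FreeGroup.map.mk]
  unfold reducedWord at hred ⊢
  let _ := Classical.decEq (Quotient s)
  exact FreeGroup.toWord_mk.trans hred.reduce_eq

/-- For `u, v ∈ F'(X)`, `u F(E) v` iff their reduced words have the same
length and are letterwise `E`-related with equal signs. -/
theorem FErel_iff_forall₂_on_Fprime {X : Type*} (E : X → X → Prop) (hE : Equivalence E)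
    (u v : FreeGroup X) (hu : u ∈ Fprime E) (hv : v ∈ Fprime E) :
    FErel E u v ↔ List.Forall₂ (fun p q : X × Bool => E p.1 q.1 ∧ p.2 = q.2)
      (reducedWord u) (reducedWord v) := by
  let s : Setoid X := ⟨E, hE⟩
  have h₁ : FErel E u v ↔
      FreeGroup.map (Quotient.mk s) u = FreeGroup.map (Quotient.mk s) v := by
    change u⁻¹ * v ∈ NE s.r ↔ _
    rw [NE_eq_ker_map, MonoidHom.mem_ker, map_mul, map_inv, inv_mul_eq_one]
  have h₂ : FreeGroup.map (Quotient.mk s) u = FreeGroup.map (Quotient.mk s) v ↔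
      reducedWord (FreeGroup.map (Quotient.mk s) u) =
        reducedWord (FreeGroup.map (Quotient.mk s) v) := by
    let _ := Classical.decEq (Quotient s)
    exact FreeGroup.toWord_injective.eq_iff.symm
  rw [h₁, h₂, reducedWord_map_of_mem_Fprime s hu, reducedWord_map_of_mem_Fprime s hv,
    ← List.forall₂_eq_eq_eq, List.forall₂_map_left_iff, List.forall₂_map_right_iff]
  have h₃ : ∀ p q : X × Bool,
      (Quotient.mk s p.1, p.2) = (Quotient.mk s q.1, q.2) ↔ E p.1 q.1 ∧ p.2 = q.2 := by
    intro p q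
    rw [Prod.mk.injEq, Quotient.eq]
    rfl
  simp only [h₃]
end

section
/- Let E be a Borel equivalence relation on a Polish space X. Then the set F'(X) of reduced words containing no subword of the form x y⁻¹ or x⁻¹ y with x E y is a Borel subset of F(X), and F(E) is a Borel subset of F(X) × F(X). Moreover F(E) is Borel bireducible with its restriction F'(E) to F'(X). -/
/-!
The quotient `F(X) / N_E` is the free group on `X / E`: the map `FreeGroup.map` induced by
`X → X / E` has kernel `N_E`. Hence `u F(E) v` iff the words of `u` and `v`, read in the alphabet
`X / E`, have the same reduction. That reduction can be carried out on words over `X` itself, by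
cancelling adjacent letters with `E`-related bases and opposite signs (`eReduce`); no selector for
`E` is needed. So `u F(E) v` iff `eReduce E u` and `eReduce E v` have the same length and agree
letter by letter up to `E` (`fErel_iff_forall₂`).

`eReduce E` is a right fold of a step function built from `List.cons`, `List.tail` and a case
distinction on `E`, so it is Borel when `E` is; the Borel structure on words is generated by the
length and the coordinates (`measurable_toList`). This makes `F(E)` Borel. Since an `E`-reduced word
is reduced and belongs to `F'(X)`, the map `u ↦ eReduce E u` is also a Borel reduction of `F(E)` to
`F'(E)`; the inclusion is a reduction in the other direction.
-/

open MeasureTheory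

/-- Lists over a measurable space, measurably identified with `Σ n, (Fin n → α)`. -/
noncomputable instance List.measurableSpace' {α : Type*} [MeasurableSpace α] :
    MeasurableSpace (List α) :=
  MeasurableSpace.comap (fun l => (⟨l.length, l.get⟩ : Σ n, Fin n → α)) inferInstance

/-- The free group `F(X)`, as the space of reduced words in `W(X)`. -/
noncomputable instance FreeGroup.measurableSpace' {X : Type*} [MeasurableSpace X] :
    MeasurableSpace (FreeGroup X) :=
  MeasurableSpace.comap reducedWord inferInstance

/-! ### The Borel structure on words -/

section Words

variable {α β γ : Type*} [MeasurableSpace α] [MeasurableSpace β] [MeasurableSpace γ]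

theorem measurableSet_list_iff {s : Set (List α)} :
    MeasurableSet s ↔ ∀ n, MeasurableSet {v : Fin n → α | List.ofFn v ∈ s} := by
  have hsig : ∀ t : Set (Σ n, Fin n → α), MeasurableSet t ↔
      ∀ n, MeasurableSet (Sigma.mk n ⁻¹' t) := by
    intro t
    change MeasurableSet[⨅ n, MeasurableSpace.map (Sigma.mk n) _] t ↔ _
    rw [MeasurableSpace.measurableSet_iInf]
    rfl
  have hinv : ∀ (n : ℕ) (v : Fin n → α),
      (⟨(List.ofFn v).length, (List.ofFn v).get⟩ : Σ n, Fin n → α) = ⟨n, v⟩ := fun n v =>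
    (List.equivSigmaTuple (α := α)).apply_symm_apply ⟨n, v⟩
  constructor
  · rintro ⟨t, ht, rfl⟩ n
    have := (hsig t).1 ht n
    have heq : {v : Fin n → α | List.ofFn v ∈
        (fun l : List α => (⟨l.length, l.get⟩ : Σ n, Fin n → α)) ⁻¹' t} = Sigma.mk n ⁻¹' t :=
      Set.ext fun v => by
        change (⟨(List.ofFn v).length, (List.ofFn v).get⟩ : Σ n, Fin n → α) ∈ t ↔ _
        rw [hinv]
        rfl
    rwa [heq]
  · intro h
    refine ⟨{p | List.ofFn p.2 ∈ s}, (hsig _).2 h, ?_⟩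
    ext l
    simp

theorem measurable_ofFn (n : ℕ) : Measurable (List.ofFn : (Fin n → α) → List α) :=
  fun _ hs => measurableSet_list_iff.1 hs n

theorem measurable_of_list {g : List α → β}
    (h : ∀ n, Measurable fun v : Fin n → α => g (List.ofFn v)) : Measurable g :=
  fun _ hs => measurableSet_list_iff.2 fun n => h n hs

theorem measurable_listLength : Measurable (List.length : List α → ℕ) :=
  measurable_of_list fun n => by simp

theorem measurable_listGetD (i : ℕ) (d : α) : Measurable fun l : List α => l.getD i d := by
  refine measurable_of_list fun n => ?_
  by_cases h : i < n
  · simpa [List.getD_eq_getElem, h] using measurable_pi_apply (⟨i, h⟩ : Fin n)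
  · simp [h]

/-- The Borel structure on words is generated by the length and the coordinates, the latter padded
by a default letter `d`. -/
theorem measurable_toList (d : α) {f : γ → List α} (hlen : Measurable fun c => (f c).length)
    (hget : ∀ i, Measurable fun c => (f c).getD i d) : Measurable f := by
  intro s hs
  have key : f ⁻¹' s = ⋃ n : ℕ, {c | (f c).length = n} ∩
      {c | List.ofFn (fun i : Fin n => (f c).getD i d) ∈ s} := by
    have hofFn : ∀ l : List α, List.ofFn (fun i : Fin l.length => l.getD i d) = l := by
      intro l
      apply List.ext_getElem <;> simp
    ext c
    simp only [Set.mem_preimage, Set.mem_iUnion, Set.mem_inter_iff, Set.mem_ofPred_eq]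
    constructor
    · intro h
      exact ⟨_, rfl, by rwa [hofFn]⟩
    · rintro ⟨n, rfl, h⟩
      rwa [hofFn] at h
  rw [key]
  refine MeasurableSet.iUnion fun n => (hlen (measurableSet_singleton n)).inter ?_
  exact (measurable_ofFn n).comp (measurable_pi_lambda _ fun i => hget i) hs

theorem measurable_listCons (d : α) : Measurable fun p : α × List α => p.1 :: p.2 := by
  refine measurable_toList d ?_ fun i => ?_
  · simpa using (measurable_listLength.comp measurable_snd).add_const 1
  · cases i with
    | zero => simpa using measurable_fst
    | succ i => simpa [Function.comp_def] using (measurable_listGetD i d).comp measurable_snd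

theorem measurable_listTail (d : α) : Measurable (List.tail : List α → List α) := by
  refine measurable_toList d ?_ fun i => ?_
  · have : Measurable fun n : ℕ => n - 1 := measurable_from_top
    simpa [Function.comp_def] using this.comp measurable_listLength
  · have : (fun l : List α => l.tail.getD i d) = fun l => l.getD (i + 1) d := by
      funext l
      cases l <;> simp
    rw [this]
    exact measurable_listGetD _ _

theorem measurable_listFoldr {f : α → β → β} (hf : Measurable fun p : α × β => f p.1 p.2)
    (b : β) : Measurable (List.foldr f b) := by
  refine measurable_of_list fun n => ?_
  induction n with
  | zero => simp
  | succ n ih =>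
    simp only [List.ofFn_succ, List.foldr_cons]
    have htail : Measurable fun (v : Fin (n + 1) → α) (i : Fin n) => v i.succ :=
      measurable_pi_lambda _ fun i => measurable_pi_apply i.succ
    have hpair : Measurable fun v : Fin (n + 1) → α =>
        (v 0, List.foldr f b (List.ofFn fun i => v i.succ)) :=
      (measurable_pi_apply 0).prodMk (ih.comp htail)
    exact hf.comp hpair

theorem measurableSet_forall₂ (d : α) {R : α → α → Prop}
    (hR : MeasurableSet {p : α × α | R p.1 p.2}) :
    MeasurableSet {p : List α × List α | List.Forall₂ R p.1 p.2} := by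
  have key : {p : List α × List α | List.Forall₂ R p.1 p.2} =
      {p | p.1.length = p.2.length} ∩ ⋂ i : ℕ,
        ({p | i < p.1.length}ᶜ ∪ {p | R (p.1.getD i d) (p.2.getD i d)}) := by
    ext ⟨l, m⟩
    simp only [List.forall₂_iff_get, Set.mem_ofPred_eq, Set.mem_inter_iff, Set.mem_iInter,
      Set.mem_union, Set.mem_compl_iff]
    refine and_congr_right fun hlm => forall_congr' fun i => ?_
    by_cases hi : i < l.length
    · have hi' : i < m.length := hlm ▸ hi
      simp [hi, hi']
    · simp [hi]
  have hl : ∀ i : ℕ, MeasurableSet {p : List α × List α | i < p.1.length} := fun i =>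
    (measurable_listLength.comp measurable_fst) (measurableSet_Ioi (a := i))
  rw [key]
  refine MeasurableSet.inter ?_ (MeasurableSet.iInter fun i => (hl i).compl.union ?_)
  · exact measurableSet_eq_fun (measurable_listLength.comp measurable_fst)
      (measurable_listLength.comp measurable_snd)
  · exact (((measurable_listGetD i d).comp measurable_fst).prodMk
      ((measurable_listGetD i d).comp measurable_snd)) hR

theorem measurableSet_isChain (d : α) {R : α → α → Prop}
    (hR : MeasurableSet {p : α × α | R p.1 p.2}) :
    MeasurableSet {l : List α | l.IsChain R} := by
  have key : {l : List α | l.IsChain R} =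
      ⋂ i : ℕ, ({l | i + 1 < l.length}ᶜ ∪ {l | R (l.getD i d) (l.getD (i + 1) d)}) := by
    ext l
    simp only [List.isChain_iff_getElem, Set.mem_ofPred_eq, Set.mem_iInter,
      Set.mem_union, Set.mem_compl_iff]
    refine forall_congr' fun i => ?_
    by_cases hi : i + 1 < l.length
    · have hi' : i < l.length := by omega
      simp [hi, hi']
    · simp [hi]
  have hl : ∀ i : ℕ, MeasurableSet {l : List α | i + 1 < l.length} := fun i =>
    measurable_listLength (measurableSet_Ioi (a := i + 1))
  rw [key]
  refine MeasurableSet.iInter fun i => (hl i).compl.union ?_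
  exact ((measurable_listGetD i d).prodMk (measurable_listGetD (i + 1) d)) hR

end Words

/-! ### Reduction of words modulo `E` -/

section Reduction

variable {X : Type*} (E : X → X → Prop)

open Classical in
/-- Prepends the letter `a` to an `E`-reduced word, cancelling it against the first letter of the
word when the bases are `E`-related and the signs are opposite. -/
noncomputable def eStep (a : X × Bool) : List (X × Bool) → List (X × Bool)
  | [] => [a]
  | b :: t => if E a.1 b.1 ∧ a.2 ≠ b.2 then t else a :: b :: t

/-- The reduction of a word modulo `E`, where `x y⁻¹` and `x⁻¹ y` cancel whenever `x E y`. -/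
noncomputable def eReduce (l : List (X × Bool)) : List (X × Bool) :=
  l.foldr (eStep E) []

variable [MeasurableSpace X]

theorem measurableSet_cancel (hBorel : MeasurableSet {p : X × X | E p.1 p.2}) :
    MeasurableSet {p : (X × Bool) × (X × Bool) | E p.1.1 p.2.1 ∧ p.1.2 ≠ p.2.2} := by
  refine MeasurableSet.inter (s₁ := {p : (X × Bool) × (X × Bool) | E p.1.1 p.2.1})
    (s₂ := {p | p.1.2 = p.2.2}ᶜ) ?_ (MeasurableSet.compl ?_)
  · exact ((measurable_fst.comp measurable_fst).prodMk (measurable_fst.comp measurable_snd)) hBorel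
  · exact measurableSet_eq_fun (measurable_snd.comp measurable_fst)
      (measurable_snd.comp measurable_snd)

theorem measurableSet_letterRel (hBorel : MeasurableSet {p : X × X | E p.1 p.2}) :
    MeasurableSet {p : (X × Bool) × (X × Bool) | E p.1.1 p.2.1 ∧ p.1.2 = p.2.2} := by
  refine MeasurableSet.inter (s₁ := {p : (X × Bool) × (X × Bool) | E p.1.1 p.2.1})
    (s₂ := {p | p.1.2 = p.2.2}) ?_ ?_
  · exact ((measurable_fst.comp measurable_fst).prodMk (measurable_fst.comp measurable_snd)) hBorel
  · exact measurableSet_eq_fun (measurable_snd.comp measurable_fst)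
      (measurable_snd.comp measurable_snd)

theorem measurable_eReduce (d : X × Bool) (hBorel : MeasurableSet {p : X × X | E p.1 p.2}) :
    Measurable (eReduce E) := by
  classical
  refine measurable_listFoldr ?_ []
  have hhead : Measurable fun p : (X × Bool) × List (X × Bool) => (p.1, p.2.getD 0 d) :=
    measurable_fst.prodMk ((measurable_listGetD 0 d).comp measurable_snd)
  have hset : MeasurableSet {p : (X × Bool) × List (X × Bool) |
      0 < p.2.length ∧ (E p.1.1 (p.2.getD 0 d).1 ∧ p.1.2 ≠ (p.2.getD 0 d).2)} :=
    ((measurable_listLength.comp measurable_snd) (measurableSet_Ioi (a := 0))).inter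
      (hhead (measurableSet_cancel E hBorel))
  have heq : (fun p : (X × Bool) × List (X × Bool) => eStep E p.1 p.2) = fun p =>
      if 0 < p.2.length ∧ (E p.1.1 (p.2.getD 0 d).1 ∧ p.1.2 ≠ (p.2.getD 0 d).2) then p.2.tail
      else p.1 :: p.2 := by
    funext ⟨a, l⟩
    cases l <;> simp [eStep]
  rw [heq]
  exact Measurable.ite hset ((measurable_listTail d).comp measurable_snd) (measurable_listCons d)

end Reduction

/-! ### The free group on the quotient -/

section Quotient

variable {X : Type*}

/-- The projection of letters over `X` to letters over `X / E`. -/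
def letterMap (s : Setoid X) (p : X × Bool) : Quotient s × Bool := (Quotient.mk s p.1, p.2)

theorem letterMap_eq_iff (s : Setoid X) (p q : X × Bool) :
    letterMap s p = letterMap s q ↔ s.r p.1 q.1 ∧ p.2 = q.2 := by
  simp only [letterMap, Prod.mk.injEq]
  exact and_congr_left fun _ => Quotient.eq

/-- Reducing modulo `E` over `X` lifts free reduction over the quotient alphabet. -/
theorem map_eReduce (s : Setoid X) [DecidableEq (Quotient s)] (l : List (X × Bool)) :
    (eReduce s.r l).map (letterMap s) = FreeGroup.reduce (l.map (letterMap s)) := by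
  induction l with
  | nil => rfl
  | cons a l ih =>
    rw [List.map_cons, FreeGroup.reduce.cons, ← ih]
    change (eStep s.r a (eReduce s.r l)).map _ = _
    cases eReduce s.r l with
    | nil => rfl
    | cons b t =>
      have h1 : ((letterMap s a).1 = (letterMap s b).1 ∧ (letterMap s a).2 = !(letterMap s b).2) ↔
          (s.r a.1 b.1 ∧ a.2 ≠ b.2) :=
        and_congr Quotient.eq Bool.eq_not
      simp only [eStep, List.map_cons]
      by_cases h : s.r a.1 b.1 ∧ a.2 ≠ b.2
      · rw [if_pos h, if_pos (h1.2 h)]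
      · rw [if_neg h, if_neg (mt h1.1 h)]
        rfl

theorem isChain_eReduce (s : Setoid X) (l : List (X × Bool)) :
    (eReduce s.r l).IsChain fun p q => ¬ (s.r p.1 q.1 ∧ p.2 ≠ q.2) := by
  classical
  have h : FreeGroup.IsReduced ((eReduce s.r l).map (letterMap s)) := by
    rw [map_eReduce]
    exact FreeGroup.isReduced_iff_reduce_eq.2 FreeGroup.reduce.idem
  rw [FreeGroup.IsReduced, List.isChain_map] at h
  refine h.imp fun p q hpq hc => hc.2 (hpq (Quotient.sound hc.1))

theorem reducedWord_mk_eReduce (s : Setoid X) (l : List (X × Bool)) :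
    reducedWord (FreeGroup.mk (eReduce s.r l)) = eReduce s.r l := by
  let := Classical.decEq X
  change (FreeGroup.mk (eReduce s.r l)).toWord = _
  rw [FreeGroup.toWord_mk]
  refine FreeGroup.IsReduced.reduce_eq ?_
  refine (isChain_eReduce s l).imp fun p q hpq he => ?_
  by_contra hne
  exact hpq ⟨he ▸ s.refl _, hne⟩

theorem mk_reducedWord (u : FreeGroup X) : FreeGroup.mk (reducedWord u) = u :=
  letI := Classical.decEq X
  FreeGroup.mk_toWord

/-- `N_E` is the kernel of the map to the free group on `X / E`. The inverse of the induced map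
`F(X) / N_E → F(X / E)` sends the class of `x` to the coset of the generator `x`. -/
theorem NE_eq_ker (s : Setoid X) :
    NE s.r = (FreeGroup.map (Quotient.mk s)).ker := by
  apply le_antisymm
  · refine Subgroup.normalClosure_le_normal ?_
    rintro _ ⟨x, y, hxy, rfl⟩
    have : Quotient.mk s x = Quotient.mk s y := Quotient.sound hxy
    simp [MonoidHom.mem_ker, this]
  · have : (NE s.r).Normal := Subgroup.normalClosure_normal
    let φ : FreeGroup (Quotient s) →* FreeGroup X ⧸ NE s.r :=
      FreeGroup.lift (Quotient.lift (fun x => (QuotientGroup.mk (FreeGroup.of x) : _ ⧸ NE s.r))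
        fun x y hxy => QuotientGroup.eq.2 (Subgroup.subset_normalClosure ⟨x, y, hxy, rfl⟩))
    have hφ : φ.comp (FreeGroup.map (Quotient.mk s)) = QuotientGroup.mk' (NE s.r) := by
      ext x
      simp [φ]
    intro w hw
    rw [MonoidHom.mem_ker] at hw
    rw [← QuotientGroup.eq_one_iff, ← QuotientGroup.mk'_apply, ← hφ, MonoidHom.comp_apply, hw,
      map_one]

theorem fErel_iff_map (s : Setoid X) (u v : FreeGroup X) :
    FErel s.r u v ↔ FreeGroup.map (Quotient.mk s) u = FreeGroup.map (Quotient.mk s) v := by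
  rw [FErel, NE_eq_ker, MonoidHom.mem_ker, map_mul, map_inv, inv_mul_eq_one]

theorem map_mk_eReduce (s : Setoid X) (l : List (X × Bool)) :
    FreeGroup.map (Quotient.mk s) (FreeGroup.mk (eReduce s.r l)) =
      FreeGroup.map (Quotient.mk s) (FreeGroup.mk l) := by
  classical
  rw [FreeGroup.map.mk, FreeGroup.map.mk]
  refine (congrArg FreeGroup.mk (map_eReduce s l)).trans FreeGroup.reduce.self

theorem fErel_iff_forall₂ (s : Setoid X) (u v : FreeGroup X) :
    FErel s.r u v ↔ List.Forall₂ (fun p q : X × Bool => s.r p.1 q.1 ∧ p.2 = q.2)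
      (eReduce s.r (reducedWord u)) (eReduce s.r (reducedWord v)) := by
  classical
  have hmap : ∀ w : FreeGroup X, (FreeGroup.map (Quotient.mk s) w).toWord =
      (eReduce s.r (reducedWord w)).map (letterMap s) := by
    intro w
    conv_lhs => rw [← mk_reducedWord w]
    rw [FreeGroup.map.mk, FreeGroup.toWord_mk, map_eReduce]
    rfl
  rw [fErel_iff_map, ← FreeGroup.toWord_inj, hmap, hmap, ← List.forall₂_eq_eq_eq,
    List.forall₂_map_left_iff, List.forall₂_map_right_iff]
  simp only [letterMap_eq_iff]

end Quotient

/-- If `E` is a Borel equivalence relation on a Polish space `X`, then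
`F'(X)` is Borel in `F(X)`, `F(E)` is Borel in `F(X) × F(X)`, and `F(E)` is Borel
bireducible with its restriction `F'(E)` to `F'(X)`. -/
theorem Fprime_borel_and_FErel_borel_and_bireducible {X : Type*} [TopologicalSpace X]
    [PolishSpace X] [MeasurableSpace X] [BorelSpace X]
    (E : X → X → Prop) (hE : Equivalence E)
    (hBorel : MeasurableSet {p : X × X | E p.1 p.2}) :
    MeasurableSet (Fprime E) ∧
    MeasurableSet {p : FreeGroup X × FreeGroup X | FErel E p.1 p.2} ∧
    BorelBireducible (FErel E)
      (fun u v : Fprime E => FErel E (u : FreeGroup X) (v : FreeGroup X)) := by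
  have hword : Measurable (reducedWord : FreeGroup X → List (X × Bool)) := comap_measurable _
  let s : Setoid X := ⟨E, hE⟩
  -- For empty `X` there is no default letter, but then all spaces involved are singletons.
  have hmeas : Measurable (eReduce E) ∧
      MeasurableSet {l : List (X × Bool) | l.IsChain fun p q => ¬ (E p.1 q.1 ∧ p.2 ≠ q.2)} ∧
      MeasurableSet {p : List (X × Bool) × List (X × Bool) |
        List.Forall₂ (fun p q : X × Bool => E p.1 q.1 ∧ p.2 = q.2) p.1 p.2} := by
    rcases isEmpty_or_nonempty X with hX | ⟨⟨x⟩⟩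
    · exact ⟨measurable_of_subsingleton_codomain _, Subsingleton.measurableSet,
        Subsingleton.measurableSet⟩
    · exact ⟨measurable_eReduce E (x, true) hBorel,
        measurableSet_isChain (x, true) (measurableSet_cancel E hBorel).compl,
        measurableSet_forall₂ (x, true) (measurableSet_letterRel E hBorel)⟩
  obtain ⟨hred, hchain, hforall⟩ := hmeas
  have hredWord := hred.comp hword
  refine ⟨hword hchain, ?_, ?_, ?_⟩
  · have : {p : FreeGroup X × FreeGroup X | FErel E p.1 p.2} =
        (fun p : FreeGroup X × FreeGroup X =>
          (eReduce E (reducedWord p.1), eReduce E (reducedWord p.2))) ⁻¹'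
          {p | List.Forall₂ (fun p q : X × Bool => E p.1 q.1 ∧ p.2 = q.2) p.1 p.2} := by
      ext p
      exact fErel_iff_forall₂ s p.1 p.2
    rw [this]
    exact ((hredWord.comp measurable_fst).prodMk (hredWord.comp measurable_snd)) hforall
  · have hfix : ∀ u : FreeGroup X, reducedWord (FreeGroup.mk (eReduce E (reducedWord u))) =
        eReduce E (reducedWord u) := fun u => reducedWord_mk_eReduce s _
    refine ⟨fun u => ⟨FreeGroup.mk (eReduce E (reducedWord u)), ?_⟩, ?_, fun u v => ?_⟩
    · change List.IsChain _ (reducedWord _)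
      rw [hfix]
      exact isChain_eReduce s _
    · refine Measurable.subtype_mk (measurable_comap_iff.2 ?_)
      simpa only [Function.comp_def, hfix] using hredWord
    · refine (fErel_iff_map s u v).trans (Iff.trans ?_ (fErel_iff_map s _ _).symm)
      have h : ∀ w : FreeGroup X, FreeGroup.map (Quotient.mk s)
          (FreeGroup.mk (eReduce E (reducedWord w))) = FreeGroup.map (Quotient.mk s) w := fun w =>
        (map_mk_eReduce s _).trans (by rw [mk_reducedWord])
      rw [h, h]
  · exact ⟨Subtype.val, measurable_subtype_coe, fun _ _ => Iff.rfl⟩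
end

section
/- Let E be a Borel equivalence relation on a Polish space X. If E is smooth (i.e., Borel reducible to the equality relation on some Polish space), then the restriction F'(E) of F(E) to the set F'(X) of reduced words containing no subword of the form x y⁻¹ or x⁻¹ y with x E y is smooth; consequently F(E) itself is smooth. -/
/-!
Let `ψ : X → Z` be a Borel reduction of `E` to equality; as Polish spaces are countably separated,
`Z` may be replaced by the Cantor space `ℕ → Bool`. The induced homomorphism `F(X) → F(ℕ → Bool)`
has kernel exactly `N_E`, because the quotient map `F(X) → F(X) ⧸ N_E` factors through it
(`map_eq_one_iff_mem_NE`). Instead of reducing words over the Cantor space measurably, one uses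
that the truncations `(ℕ → Bool) → (Fin n → Bool)` induce a jointly injective family of
homomorphisms on free groups: a nontrivial reduced word has finitely many letters, so some
truncation is injective on them and keeps the word reduced (`eq_one_of_forall_map_trunc_eq_one`).
Hence `F(E)` reduces to equality on a countable product of the countable groups
`F(Fin n → Bool)`, coded by `ℕ`. Each coordinate is Borel, being on words of a given length a
finite product of Borel functions into a countable discrete group (`measurable_comp_lift`).
The statement for `F'(E)` follows by restriction.
-/

open MeasureTheory

def SmoothAux {X : Type*} [MeasurableSpace X] (E : X → X → Prop)
    (Z : Type) [TopologicalSpace Z] : Prop :=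
  PolishSpace Z ∧ ∃ ψ : X → Z, @Measurable X Z _ (borel Z) ψ ∧ ∀ a b, E a b ↔ ψ a = ψ b

/-- An equivalence relation is smooth if it admits a Borel reduction to equality
on some Polish space. -/
def SmoothRel {X : Type*} [MeasurableSpace X] (E : X → X → Prop) : Prop :=
  ∃ (Z : Type) (tZ : TopologicalSpace Z), @SmoothAux X _ E Z tZ

/-- A homomorphism from `F(X)` to a countable discrete group is Borel if it is Borel on `X`.
The target is not given a measurable space, since free groups already carry the one of reduced
words; composing with an arbitrary `e` into `ℕ` expresses discreteness. -/
theorem measurable_comp_lift {X G : Type*} [MeasurableSpace X] [Group G] [Countable G]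
    (h : X → G) (hh : ∀ g, MeasurableSet (h ⁻¹' {g})) (e : G → ℕ) :
    Measurable fun u : FreeGroup X => e (FreeGroup.lift h u) := by
  let : MeasurableSpace G := ⊤
  have hm : Measurable h := measurable_to_countable' hh
  have hφ : Measurable fun p : X × Bool => cond p.2 (h p.1) (h p.1)⁻¹ := by
    refine measurable_from_prod_countable_left fun b => ?_
    cases b
    · exact (Measurable.of_discrete (f := fun g : G => g⁻¹)).comp hm
    · exact hm
  have hprod : ∀ n : ℕ, Measurable fun a : Fin n → X × Bool =>
      ((List.ofFn a).map fun p => cond p.2 (h p.1) (h p.1)⁻¹).prod := by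
    intro n
    induction n with
    | zero => simp
    | succ n ih =>
      simp only [List.ofFn_succ, List.map_cons, List.prod_cons]
      refine (hφ.comp (measurable_pi_apply 0)).mul (ih.comp ?_)
      exact measurable_pi_lambda _ fun i => measurable_pi_apply _
  have hsigma : Measurable fun s : Σ n, Fin n → X × Bool =>
      e ((List.ofFn s.2).map fun p => cond p.2 (h p.1) (h p.1)⁻¹).prod :=
    fun t ht => MeasurableSpace.measurableSet_iInf.2 fun n =>
      ((Measurable.of_discrete (f := e)).comp (hprod n)) ht
  have hlist : Measurable fun l : List (X × Bool) =>
      (⟨l.length, l.get⟩ : Σ n, Fin n → X × Bool) := comap_measurable _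
  have hword : Measurable (reducedWord : FreeGroup X → List (X × Bool)) := comap_measurable _
  convert hsigma.comp (hlist.comp hword) using 1
  funext u
  classical
  simp only [Function.comp_apply, List.ofFn_get]
  rw [← FreeGroup.lift_mk]
  simp only [reducedWord, FreeGroup.mk_toWord]

/-- The kernel of the homomorphism of free groups induced by a reduction `ψ` of `E` to equality
is `N_E`. -/
theorem map_eq_one_iff_mem_NE {X Y : Type*} {E : X → X → Prop} (ψ : X → Y)
    (hψ : ∀ a b, E a b ↔ ψ a = ψ b) (w : FreeGroup X) :
    FreeGroup.map ψ w = 1 ↔ w ∈ NE E := by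
  classical
  have : (NE E).Normal := Subgroup.normalClosure_normal
  constructor
  · intro hw
    -- sends `ψ x` to the class of `x`, and the points outside the range of `ψ` to `1`
    let σ : FreeGroup Y →* FreeGroup X ⧸ NE E := FreeGroup.lift fun y =>
      if hy : ∃ x, ψ x = y then QuotientGroup.mk' (NE E) (FreeGroup.of hy.choose) else 1
    have hσ : σ.comp (FreeGroup.map ψ) = QuotientGroup.mk' (NE E) := by
      ext x
      have hx : ∃ x', ψ x' = ψ x := ⟨x, rfl⟩
      simp only [σ, MonoidHom.comp_apply, FreeGroup.map.of, FreeGroup.lift_apply_of, dif_pos hx]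
      refine QuotientGroup.eq.2 (Subgroup.subset_normalClosure ?_)
      exact ⟨_, _, (hψ _ _).2 hx.choose_spec, rfl⟩
    rw [← QuotientGroup.eq_one_iff]
    change QuotientGroup.mk' (NE E) w = 1
    rw [← hσ, MonoidHom.comp_apply, hw, map_one]
  · intro hw
    have hle : NE E ≤ (FreeGroup.map ψ).ker := by
      refine Subgroup.normalClosure_le_normal ?_
      rintro _ ⟨x, y, hxy, rfl⟩
      simp [MonoidHom.mem_ker, (hψ _ _).1 hxy]
    exact hle hw

/-- The homomorphisms induced by the truncations `(ℕ → Bool) → (Fin n → Bool)` separate the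
points of the free group on the Cantor space. -/
theorem eq_one_of_forall_map_trunc_eq_one (w : FreeGroup (ℕ → Bool))
    (hw : ∀ n : ℕ, FreeGroup.map (fun (z : ℕ → Bool) (i : Fin n) => z i) w = 1) : w = 1 := by
  classical
  have hsep : ∀ p ∈ {p : (ℕ → Bool) × Bool | p ∈ w.toWord},
      ∀ q ∈ {q : (ℕ → Bool) × Bool | q ∈ w.toWord}, ∀ᶠ n : ℕ in Filter.atTop,
      (fun i : Fin n => p.1 i) = (fun i : Fin n => q.1 i) → p.1 = q.1 := by
    intro p _ q _
    by_cases h : p.1 = q.1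
    · exact Filter.Eventually.of_forall fun _ _ => h
    · obtain ⟨k, hk⟩ := Function.ne_iff.1 h
      filter_upwards [Filter.eventually_gt_atTop k] with n hn heq
      exact absurd (congrFun heq ⟨k, hn⟩) hk
  have hfin : {p : (ℕ → Bool) × Bool | p ∈ w.toWord}.Finite := w.toWord.finite_toSet
  obtain ⟨n, hn⟩ := ((Filter.eventually_all_finite hfin).2 fun p hp =>
    (Filter.eventually_all_finite hfin).2 (hsep p hp)).exists
  have hred : FreeGroup.IsReduced
      (w.toWord.map fun p => ((fun i : Fin n => p.1 i), p.2)) := by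
    have := FreeGroup.isReduced_toWord (x := w)
    unfold FreeGroup.IsReduced at this ⊢
    rw [List.isChain_map]
    refine List.IsChain.imp_of_mem_imp (fun p q hp hq hpq heq => ?_) this
    exact hpq (hn p hp q hq heq)
  have h1 := hw n
  rw [← FreeGroup.mk_toWord (x := w), FreeGroup.map.mk] at h1
  have h2 := congrArg FreeGroup.toWord h1
  rw [FreeGroup.toWord_mk, hred.reduce_eq, FreeGroup.toWord_one, List.map_eq_nil_iff] at h2
  exact FreeGroup.toWord_eq_nil_iff.1 h2

theorem smoothRel_FErel {X : Type*} [MeasurableSpace X] (E : X → X → Prop)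
    (hSmooth : SmoothRel E) : SmoothRel (FErel E) := by
  obtain ⟨Z, tZ, hZ, ψ, hψm, hψ⟩ := hSmooth
  let : MeasurableSpace Z := borel Z
  have : BorelSpace Z := ⟨rfl⟩
  obtain ⟨c, hcm, hc⟩ := MeasurableSpace.measurable_injection_nat_bool_of_countablySeparated Z
  have hcψ : ∀ a b, E a b ↔ (c ∘ ψ) a = (c ∘ ψ) b := fun a b => by
    rw [hψ, Function.comp_apply, Function.comp_apply, hc.eq_iff]
  have : ∀ n : ℕ, Countable (FreeGroup (Fin n → Bool)) := fun n =>
    (FreeGroup.toWord_injective (α := Fin n → Bool)).countable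
  choose e he using fun n : ℕ => exists_injective_nat (FreeGroup (Fin n → Bool))
  let t (n : ℕ) (z : ℕ → Bool) (i : Fin n) : Bool := z i
  refine ⟨ℕ → ℕ, inferInstance, inferInstance,
    fun u n => e n (FreeGroup.map (t n) (FreeGroup.map (c ∘ ψ) u)), ?_, fun u v => ?_⟩
  · rw [← BorelSpace.measurable_eq (α := ℕ → ℕ)]
    refine measurable_pi_lambda _ fun n => ?_
    have ht : Measurable (t n) := measurable_pi_lambda _ fun i => measurable_pi_apply _
    convert measurable_comp_lift (fun x => FreeGroup.of (t n (c (ψ x)))) (fun g => ?_) (e n)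
      using 3 with u
    · rw [FreeGroup.map.comp, FreeGroup.map_eq_lift]
      rfl
    · exact (ht.comp (hcm.comp hψm)) (Set.toFinite (FreeGroup.of ⁻¹' {g})).measurableSet
  · rw [FErel, ← map_eq_one_iff_mem_NE (c ∘ ψ) hcψ, funext_iff]
    simp only [(he _).eq_iff]
    constructor
    · intro h n
      rw [map_mul, map_inv, inv_mul_eq_one] at h
      rw [h]
    · intro h
      refine eq_one_of_forall_map_trunc_eq_one _ fun n => ?_
      rw [map_mul, map_mul, map_inv, map_inv, inv_mul_eq_one]
      exact h n

/-- If a Borel equivalence relation `E` on a Polish space is smooth, then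
the restriction `F'(E)` of `F(E)` to `F'(X)` is smooth, and consequently so is `F(E)`. -/
theorem smooth_of_smooth_FE {X : Type*} [TopologicalSpace X] [PolishSpace X]
    [MeasurableSpace X] [BorelSpace X]
    (E : X → X → Prop) (hE : Equivalence E)
    (hBorel : MeasurableSet {p : X × X | E p.1 p.2})
    (hSmooth : SmoothRel E) :
    SmoothRel (fun u v : Fprime E => FErel E (u : FreeGroup X) (v : FreeGroup X)) ∧
    SmoothRel (FErel E) := by
  have h := smoothRel_FErel E hSmooth
  refine ⟨?_, h⟩
  obtain ⟨Z, tZ, hZ, ψ, hψm, hψ⟩ := h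
  exact ⟨Z, tZ, hZ, fun u => ψ u, hψm.comp measurable_subtype_coe, fun u v => hψ u v⟩
end

section
/- There exists a path-connected Polish space X with basepoint x₀ such that the equivalence relation E₀ of eventual equality on Cantor space is Borel bireducible with the homotopy relation ∼_X on the loop space ΩX. -/
/-!
The witness is a telescope of infinite tori,
`Tele = {(t, z) ∈ ℝ × ℂ^ℕ | n ≤ t + ‖z n‖ for all n}`: a closed subset of `ℝ × ℂ^ℕ`, hence Polish,
in which raising the height `t` successively allows the coordinates `z 0, z 1, …` to pass
through the origin. Its fundamental group is `ℤ^ℕ` modulo finitely supported sequences.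

The height of a loop or of a homotopy is bounded, so all but finitely many coordinates stay in
the punctured plane, where they have a winding number that homotopies preserve. Conversely, if
the winding numbers of two loops agree for all but finitely many coordinates, those coordinates
can be interpolated in polar form without raising the height, whereas for the finitely many
others one interpolates linearly and raises the height as needed. Hence two loops are homotopic
iff their sequences of winding numbers are eventually equal (`Tele.loopHomotopic_iff`).

`E₀` reduces to this relation by letting a binary sequence prescribe the winding numbers. In
the other direction a loop is sent to the indicator in `ℕ × ℤ` of the graph of its winding
numbers: changing the sequence at one `n` changes at most two values of the indicator, so
eventual equality of the sequences becomes `E₀`. The map is Borel because having a given winding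
number is an open condition (`isOpen_hasWinding`).
-/

open MeasureTheory

/-- The relation `E₀` of eventual equality on Cantor space. -/
def E₀ (c d : ℕ → Bool) : Prop := ∀ᶠ n in Filter.atTop, c n = d n

/-- `Y` is a path-connected Polish space whose loop homotopy relation (at some basepoint)
is Borel bireducible with `E`. -/
def RealizesHomotopyAux {X : Type*} [MeasurableSpace X] (E : X → X → Prop)
    (Y : Type) [TopologicalSpace Y] : Prop :=
  PolishSpace Y ∧ PathConnectedSpace Y ∧
    ∃ y₀ : Y, BorelBireducible E (LoopHomotopic (Y := Y) (y₀ := y₀))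

open unitInterval Topology

/-! ### Winding numbers of plane loops -/

/-- `θ` is a continuous choice of argument along the plane path `γ`; no condition is imposed
at the times where `γ` vanishes. -/
def IsAngle (γ : C(I, ℂ)) (θ : C(I, ℝ)) : Prop :=
  ∀ s, γ s = ‖γ s‖ * Complex.exp (θ s * Complex.I)

/-- The plane path `γ` avoids the origin and turns around it exactly `m` times. -/
def HasWinding (γ : C(I, ℂ)) (m : ℤ) : Prop :=
  (∀ s, γ s ≠ 0) ∧ ∃ θ : C(I, ℝ), IsAngle γ θ ∧ θ 1 - θ 0 = m * (2 * Real.pi)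

lemma IsAngle.exp_eq {γ : C(I, ℂ)} {θ θ' : C(I, ℝ)} (h : IsAngle γ θ) (h' : IsAngle γ θ')
    {s : I} (hs : γ s ≠ 0) :
    Complex.exp (θ s * Complex.I) = Complex.exp (θ' s * Complex.I) := by
  have h1 := (h s).symm.trans (h' s)
  exact mul_left_cancel₀ (by simpa using hs) h1

lemma exists_int_of_exp_eq {x y : ℝ}
    (h : Complex.exp (x * Complex.I) = Complex.exp (y * Complex.I)) :
    ∃ n : ℤ, x = y + n * (2 * Real.pi) := by
  obtain ⟨n, hn⟩ := Complex.exp_eq_exp_iff_exists_int.1 h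
  refine ⟨n, ?_⟩
  have : (x : ℂ) * Complex.I = ((y + n * (2 * Real.pi) : ℝ) : ℂ) * Complex.I := by
    rw [hn]; push_cast; ring
  exact_mod_cast mul_right_cancel₀ Complex.I_ne_zero this

lemma exp_add_int_mul (x : ℝ) (n : ℤ) :
    Complex.exp (((x + n * (2 * Real.pi) : ℝ) : ℂ) * Complex.I)
      = Complex.exp (x * Complex.I) := by
  refine Complex.exp_eq_exp_iff_exists_int.2 ⟨n, ?_⟩
  push_cast; ring

/-- An angle is determined by its initial value, by uniqueness of lifts along `Circle.exp`. -/
lemma IsAngle.eq_of_zero {γ : C(I, ℂ)} {θ θ' : C(I, ℝ)} (hγ : ∀ s, γ s ≠ 0)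
    (h : IsAngle γ θ) (h' : IsAngle γ θ') (h0 : θ 0 = θ' 0) : θ = θ' := by
  have := Circle.isCoveringMap_exp.eq_of_comp_eq θ.continuous θ'.continuous
    (by
      funext s
      apply Circle.ext
      simpa using h.exp_eq h' (hγ s)) 0 h0
  exact DFunLike.coe_injective this

lemma IsAngle.add_int {γ : C(I, ℂ)} {θ : C(I, ℝ)} (h : IsAngle γ θ) (n : ℤ) :
    IsAngle γ (θ + ContinuousMap.const I (n * (2 * Real.pi))) := by
  intro s
  rw [ContinuousMap.add_apply, ContinuousMap.const_apply, exp_add_int_mul]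
  exact h s

lemma HasWinding.unique {γ : C(I, ℂ)} {m m' : ℤ} (h : HasWinding γ m) (h' : HasWinding γ m') :
    m = m' := by
  obtain ⟨h0, θ, hθ, hm⟩ := h
  obtain ⟨-, θ', hθ', hm'⟩ := h'
  obtain ⟨n, hn⟩ := exists_int_of_exp_eq (hθ.exp_eq hθ' (h0 0))
  have := hθ.eq_of_zero h0 (hθ'.add_int n) hn
  subst this
  simp only [ContinuousMap.add_apply, ContinuousMap.const_apply] at hm
  have h1 : (m : ℝ) * (2 * Real.pi) = m' * (2 * Real.pi) := by linarith
  exact_mod_cast mul_right_cancel₀ Real.two_pi_pos.ne' h1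

lemma exists_hasWinding {γ : C(I, ℂ)} (h0 : ∀ s, γ s ≠ 0) (h01 : γ 0 = γ 1) :
    ∃ m, HasWinding γ m := by
  let γ' : C(I, {z : ℂ // z ≠ 0}) := ⟨fun s => ⟨γ s, h0 s⟩, by fun_prop⟩
  obtain ⟨L, hL, -⟩ := Complex.isCoveringMap_exp.exists_path_lifts γ' (Complex.log (γ 0))
    (by apply Subtype.ext; simp [γ', Complex.exp_log (h0 0)])
  have hL' : ∀ s, γ s = Complex.exp (L s) := fun s => by
    have := congrArg Subtype.val (congrFun hL s)
    simpa [γ'] using this.symm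
  let θ : C(I, ℝ) := ⟨fun s => (L s).im, by fun_prop⟩
  have hθ : IsAngle γ θ := fun s => by
    rw [hL' s, Complex.norm_exp, Complex.ofReal_exp, ← Complex.exp_add]
    simp [θ, Complex.re_add_im]
  have : Complex.exp (θ 1 * Complex.I) = Complex.exp (θ 0 * Complex.I) := by
    have h1 := hθ 1
    have h2 := hθ 0
    rw [h01] at h2
    exact mul_left_cancel₀ (by simpa using h0 1) (h1.symm.trans h2)
  obtain ⟨m, hm⟩ := exists_int_of_exp_eq this
  exact ⟨m, h0, θ, hθ, by linarith⟩

/-- A closed path that stays nearer to `γ` than the origin does has the same winding number: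
`γ' / γ` takes values in the slit plane, where the principal argument is continuous. -/
lemma HasWinding.of_close {γ γ' : C(I, ℂ)} {m : ℤ} (h : HasWinding γ m) (h01 : γ 0 = γ 1)
    (h01' : γ' 0 = γ' 1) (hc : ∀ s, ‖γ' s - γ s‖ < ‖γ s‖) : HasWinding γ' m := by
  obtain ⟨h0, θ, hθ, hm⟩ := h
  have hslit : ∀ s, γ' s / γ s ∈ Complex.slitPlane := fun s => by
    have h1 : ‖(γ' s - γ s) / γ s‖ < 1 := by
      rw [norm_div]; exact (div_lt_one (norm_pos_iff.2 (h0 s))).2 (hc s)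
    have h2 := Complex.mem_slitPlane_of_norm_lt_one h1
    have h3 : 1 + (γ' s - γ s) / γ s = γ' s / γ s := by field_simp [h0 s]; ring
    rwa [h3] at h2
  have hcont : Continuous fun s => Complex.arg (γ' s / γ s) := by
    rw [continuous_iff_continuousAt]
    intro s
    exact ContinuousAt.comp (f := fun s => γ' s / γ s) (Complex.continuousAt_arg (hslit s))
      (γ'.continuous.continuousAt.div γ.continuous.continuousAt (h0 s))
  refine ⟨fun s hs => ?_, θ + ⟨_, hcont⟩, fun s => ?_, ?_⟩
  · have := Complex.slitPlane_ne_zero (hslit s)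
    simp [hs] at this
  · have h1 := Complex.norm_mul_exp_arg_mul_I (γ' s / γ s)
    have h2 := hθ s
    have h3 : γ' s = γ s * (γ' s / γ s) := by field_simp [h0 s]
    have h4 : ‖γ' s‖ = ‖γ s‖ * ‖γ' s / γ s‖ := by rw [← norm_mul, ← h3]
    simp only [h4, ContinuousMap.add_apply, ContinuousMap.coe_mk]
    refine h3.trans ?_
    calc γ s * (γ' s / γ s) = (‖γ s‖ * Complex.exp (θ s * Complex.I)) *
          (‖γ' s / γ s‖ * Complex.exp (Complex.arg (γ' s / γ s) * Complex.I)) := by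
          rw [h1, ← h2]
      _ = _ := by push_cast; rw [add_mul, Complex.exp_add]; ring
  · simp only [ContinuousMap.add_apply, ContinuousMap.coe_mk, h01, h01']
    linarith

/-- Among closed plane paths, having winding number `m` is an open condition. -/
lemma isOpen_hasWinding {X : Type*} [TopologicalSpace X] {Γ : X → C(I, ℂ)} (hΓ : Continuous Γ)
    (h01 : ∀ x, Γ x 0 = Γ x 1) (m : ℤ) : IsOpen {x | HasWinding (Γ x) m} := by
  rw [isOpen_iff_mem_nhds]
  intro x hx
  obtain ⟨s₀, -, hs₀⟩ := isCompact_univ.exists_isMinOn Set.univ_nonempty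
    (Γ x).continuous.norm.continuousOn
  have hpos : 0 < ‖Γ x s₀‖ := norm_pos_iff.2 (hx.1 s₀)
  filter_upwards [hΓ.continuousAt (Metric.ball_mem_nhds (Γ x) hpos)] with y hy
  refine HasWinding.of_close hx (h01 x) (h01 y) fun s => ?_
  have h1 := ContinuousMap.dist_apply_le_dist (f := Γ y) (g := Γ x) s
  rw [dist_eq_norm] at h1
  exact (h1.trans_lt hy).trans_le (hs₀ (Set.mem_univ s))

/-- Homotopy invariance of the winding number. -/
lemma HasWinding.of_homotopy {X : Type*} [TopologicalSpace X] [PreconnectedSpace X]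
    {Γ : X → C(I, ℂ)} (hΓ : Continuous Γ) (h01 : ∀ x, Γ x 0 = Γ x 1) (h0 : ∀ x s, Γ x s ≠ 0)
    {m : ℤ} {x : X} (hx : HasWinding (Γ x) m) (y : X) : HasWinding (Γ y) m := by
  have hcl : IsClopen {x | HasWinding (Γ x) m} := by
    refine ⟨⟨?_⟩, isOpen_hasWinding hΓ h01 m⟩
    have : {x | HasWinding (Γ x) m}ᶜ = ⋃ m' ∈ {k : ℤ | k ≠ m}, {x | HasWinding (Γ x) m'} := by
      ext z
      simp only [Set.mem_compl_iff, Set.mem_ofPred_eq, Set.mem_iUnion, exists_prop]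
      constructor
      · intro hz
        obtain ⟨k, hk⟩ := exists_hasWinding (h0 z) (h01 z)
        exact ⟨k, fun e => hz (e ▸ hk), hk⟩
      · rintro ⟨k, hk, hz⟩ hz'
        exact hk (hz.unique hz')
    rw [this]
    exact isOpen_biUnion fun k _ => isOpen_hasWinding hΓ h01 k
  exact (hcl.eq_univ ⟨x, hx⟩).ge (Set.mem_univ y)

/-- Two nowhere vanishing paths with common initial point and winding number have angles with
the same endpoints. -/
lemma HasWinding.exists_angles {γ γ' : C(I, ℂ)} {m : ℤ} (h : HasWinding γ m)
    (h' : HasWinding γ' m) (h0 : γ 0 = γ' 0) :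
    ∃ α β : C(I, ℝ), IsAngle γ α ∧ IsAngle γ' β ∧ α 0 = β 0 ∧ α 1 = β 1 := by
  obtain ⟨hne, θ, hθ, hm⟩ := h
  obtain ⟨-, θ', hθ', hm'⟩ := h'
  have e : Complex.exp (θ 0 * Complex.I) = Complex.exp (θ' 0 * Complex.I) := by
    have h1 := hθ 0
    have h2 := hθ' 0
    rw [← h0] at h2
    exact mul_left_cancel₀ (by simpa using hne 0) (h1.symm.trans h2)
  obtain ⟨n, hn⟩ := exists_int_of_exp_eq e
  refine ⟨θ, _, hθ, hθ'.add_int n, ?_, ?_⟩ <;>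
    simp only [ContinuousMap.add_apply, ContinuousMap.const_apply] <;> linarith

/-! ### The space and its loops -/

/-- A model of the mapping telescope of the projections
`∏_{k ≥ n} S¹ → ∏_{k ≥ n + 1} S¹`: at height `t`, the coordinates `z n` with `n > t`
are confined to the punctured plane, the others may vanish. -/
def Tele : Set (ℝ × (ℕ → ℂ)) := {p | ∀ n : ℕ, (n : ℝ) ≤ p.1 + ‖p.2 n‖}

lemma isClosed_Tele : IsClosed Tele := by
  have : Tele = ⋂ n : ℕ, {p : ℝ × (ℕ → ℂ) | (n : ℝ) ≤ p.1 + ‖p.2 n‖} := by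
    ext p; simp [Tele]
  rw [this]
  exact isClosed_iInter fun n => isClosed_le (by fun_prop) (by fun_prop)

namespace Tele

/-- The basepoint: height `0`, and `n`-th coordinate `n + 1`. -/
noncomputable def base : Tele := ⟨(0, fun n => (n : ℂ) + 1), fun n => by
  have : ‖(n : ℂ) + 1‖ = n + 1 := by exact_mod_cast Complex.norm_natCast (n + 1)
  simp [this]⟩

/-- Radii move linearly to `n + 1` and principal arguments linearly to `0`; the defining
inequalities are convex in the radii and the height. -/
lemma joined_base (p : Tele) : Joined p base := by
  obtain ⟨⟨t, z⟩, hp⟩ := p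
  let w : ℕ → I → ℂ := fun n u =>
    (((1 - (u : ℝ)) * ‖z n‖ + u * (n + 1) : ℝ) : ℂ) *
      Complex.exp (((1 - (u : ℝ)) * Complex.arg (z n) : ℝ) * Complex.I)
  have hw : ∀ n u, ‖w n u‖ = (1 - (u : ℝ)) * ‖z n‖ + u * (n + 1) := fun n u => by
    simp only [w]
    rw [norm_mul, Complex.norm_exp_ofReal_mul_I, mul_one, Complex.norm_real, Real.norm_eq_abs,
      abs_of_nonneg]
    have := u.2.1
    have := u.2.2
    have : 0 ≤ 1 - (u : ℝ) := by linarith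
    positivity
  refine ⟨⟨⟨fun u => ⟨((1 - (u : ℝ)) * t, fun n => w n u), fun n => ?_⟩, ?_⟩, ?_, ?_⟩⟩
  · have h1 := hp n
    have h2 := u.2.1
    have h3 : 0 ≤ 1 - (u : ℝ) := by linarith [u.2.2]
    simp only [hw]
    simp only at h1
    nlinarith [mul_le_mul_of_nonneg_left h1 h3]
  · refine Continuous.subtype_mk ?_ _
    simp only [w]
    fun_prop
  · apply Subtype.ext
    refine Prod.ext (by simp) (funext fun n => ?_)
    simp [w, Complex.norm_mul_exp_arg_mul_I]
  · apply Subtype.ext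
    refine Prod.ext (by simp [base]) (funext fun n => ?_)
    simp [w, base]

instance : PathConnectedSpace Tele where
  nonempty := ⟨base⟩
  joined p q := (joined_base p).trans (joined_base q).symm

/-- The `n`-th coordinate of a map into `Tele`. -/
noncomputable def coord {X : Type*} [TopologicalSpace X] (f : C(X, Tele)) (n : ℕ) : C(X, ℂ) :=
  ⟨fun s => (f s).1.2 n, by fun_prop⟩

lemma continuous_coord (n : ℕ) : Continuous fun f : Loop Tele base => coord f.1 n :=
  (ContinuousMap.continuous_postcomp (⟨fun p : Tele => p.1.2 n, by fun_prop⟩ : C(Tele, ℂ))).comp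
    continuous_subtype_val

lemma coord_closed (f : Loop Tele base) (n : ℕ) : coord f.1 n 0 = coord f.1 n 1 := by
  simp [coord, f.2.1, f.2.2]

lemma coord_zero (f : Loop Tele base) (n : ℕ) : coord f.1 n 0 = n + 1 := by
  simp [coord, f.2.1, base]

/-- The height is bounded on a compact space, so all but finitely many coordinates avoid `0`. -/
lemma eventually_coord_ne {X : Type*} [TopologicalSpace X] [CompactSpace X] (f : C(X, Tele)) :
    ∀ᶠ n in Filter.atTop, ∀ x, coord f n x ≠ 0 := by
  have hc : Continuous fun x => (f x).1.1 := by fun_prop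
  obtain ⟨C, hC⟩ := (isCompact_range hc).bddAbove
  obtain ⟨N, hN⟩ := exists_nat_gt C
  filter_upwards [Filter.eventually_ge_atTop N] with n hn x hx
  have h1 := (f x).2 n
  have h2 := hC ⟨x, rfl⟩
  have h3 : (N : ℝ) ≤ n := by exact_mod_cast hn
  simp only [coord, ContinuousMap.coe_mk] at hx
  rw [hx, norm_zero] at h1
  simp only at h2
  linarith

/-- The `n`-th coordinate of the loop `f` has winding number `m`. -/
def Winds (f : Loop Tele base) (n : ℕ) (m : ℤ) : Prop := HasWinding (coord f.1 n) m

lemma eventually_winds_of_homotopic {f g : Loop Tele base} (h : LoopHomotopic f g) :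
    ∀ᶠ n in Filter.atTop, ∀ m, Winds f n m ↔ Winds g n m := by
  obtain ⟨H, hf, hg, hb⟩ := h
  filter_upwards [eventually_coord_ne H] with n hn m
  let Γ : I → C(I, ℂ) := ((coord H n).comp ContinuousMap.prodSwap).curry
  have hΓ : Continuous Γ := ContinuousMap.continuous _
  have hΓa : ∀ u s, Γ u s = (H (s, u)).1.2 n := fun u s => rfl
  have h0 : Γ 0 = coord f.1 n := by ext s; rw [hΓa, hf]; rfl
  have h1 : Γ 1 = coord g.1 n := by ext s; rw [hΓa, hg]; rfl
  have h01 : ∀ u, Γ u 0 = Γ u 1 := fun u => by rw [hΓa, hΓa, (hb u).1, (hb u).2]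
  have hne : ∀ u s, Γ u s ≠ 0 := fun u s => hn (s, u)
  unfold Winds
  rw [← h0, ← h1]
  exact ⟨fun h => h.of_homotopy hΓ h01 hne 1, fun h => h.of_homotopy hΓ h01 hne 0⟩

/-- Far coordinates are deformed in polar form, the finitely many others linearly; the height
is raised by exactly what the latter require, which is nothing at the boundary of the square. -/
lemma homotopic_of_eventually_winds {f g : Loop Tele base}
    (h : ∀ᶠ n in Filter.atTop, ∀ m, Winds f n m ↔ Winds g n m) : LoopHomotopic f g := by
  obtain ⟨N, hN⟩ := Filter.eventually_atTop.1 (h.and (eventually_coord_ne f.1))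
  have hang : ∀ n, ∃ α β : C(I, ℝ), N ≤ n →
      IsAngle (coord f.1 n) α ∧ IsAngle (coord g.1 n) β ∧ α 0 = β 0 ∧ α 1 = β 1 := fun n => by
    by_cases hn : N ≤ n
    · obtain ⟨m, hm⟩ := exists_hasWinding (hN n hn).2 (coord_closed f n)
      obtain ⟨α, β, h⟩ := HasWinding.exists_angles hm (((hN n hn).1 m).1 hm)
        (by rw [coord_zero, coord_zero])
      exact ⟨α, β, fun _ => h⟩
    · exact ⟨0, 0, fun h => absurd h hn⟩
  choose α β hαβ using hang
  let z : I × I → ℕ → ℂ := fun p n =>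
    if n < N then (1 - (p.2 : ℝ) : ℝ) * coord f.1 n p.1 + (p.2 : ℝ) * coord g.1 n p.1
    else (((1 - (p.2 : ℝ)) * ‖coord f.1 n p.1‖ + p.2 * ‖coord g.1 n p.1‖ : ℝ) : ℂ) *
      Complex.exp (((1 - (p.2 : ℝ)) * α n p.1 + p.2 * β n p.1 : ℝ) * Complex.I)
  have hz : Continuous z := by
    refine continuous_pi fun n => ?_
    by_cases hn : n < N
    · simp only [z, hn, if_true]; fun_prop
    · simp only [z, hn, if_false]; fun_prop
  let c : I × I → ℝ := fun p => (1 - (p.2 : ℝ)) * (f.1 p.1).1.1 + p.2 * (g.1 p.1).1.1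
  have hc : Continuous c := by simp only [c]; fun_prop
  let T : I × I → ℝ := fun p => c p + ∑ n ∈ Finset.range N, max 0 (n - ‖z p n‖ - c p)
  have hT : Continuous T := by simp only [T]; fun_prop
  have hmem : ∀ p, ((T p, z p) : ℝ × (ℕ → ℂ)) ∈ Tele := fun p n => by
    have hu := p.2.2.1
    have hu' : 0 ≤ 1 - (p.2 : ℝ) := by linarith [p.2.2.2]
    simp only [T]
    by_cases hn : n < N
    · have := Finset.single_le_sum (f := fun n : ℕ => max 0 ((n : ℝ) - ‖z p n‖ - c p))
        (fun i _ => le_max_left _ _) (Finset.mem_range.2 hn)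
      have h2 := le_max_right 0 ((n : ℝ) - ‖z p n‖ - c p)
      linarith
    · have hs : 0 ≤ ∑ n ∈ Finset.range N, max 0 ((n : ℝ) - ‖z p n‖ - c p) :=
        Finset.sum_nonneg fun i _ => le_max_left _ _
      have hnorm : ‖z p n‖ = (1 - (p.2 : ℝ)) * ‖coord f.1 n p.1‖ + p.2 * ‖coord g.1 n p.1‖ := by
        simp only [z, hn, if_false]
        rw [norm_mul, Complex.norm_exp_ofReal_mul_I, mul_one, Complex.norm_real,
          Real.norm_eq_abs, abs_of_nonneg]
        positivity
      have h1 : (1 - (p.2 : ℝ)) * n ≤ (1 - (p.2 : ℝ)) * ((f.1 p.1).1.1 + ‖coord f.1 n p.1‖) :=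
        mul_le_mul_of_nonneg_left ((f.1 p.1).2 n) hu'
      have h2 : (p.2 : ℝ) * n ≤ (p.2 : ℝ) * ((g.1 p.1).1.1 + ‖coord g.1 n p.1‖) :=
        mul_le_mul_of_nonneg_left ((g.1 p.1).2 n) hu
      have h3 : c p = (1 - (p.2 : ℝ)) * (f.1 p.1).1.1 + p.2 * (g.1 p.1).1.1 := rfl
      rw [hnorm]
      linarith
  -- Where the formulas restrict to a point of `Tele` at height `c`, no correction is added.
  have hval : ∀ (p : I × I) (q : Tele), c p = q.1.1 → z p = q.1.2 → T p = q.1.1 := by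
    intro p q hcq hzq
    simp only [T]
    rw [Finset.sum_eq_zero, add_zero, hcq]
    intro n _
    have := q.2 n
    rw [hcq, hzq]
    exact max_eq_left (by linarith)
  let H : C(I × I, Tele) := ⟨fun p => ⟨(T p, z p), hmem p⟩, (hT.prodMk hz).subtype_mk _⟩
  have hH : ∀ (p : I × I) (q : Tele), c p = q.1.1 → z p = q.1.2 → H p = q :=
    fun p q hcq hzq => Subtype.ext (Prod.ext (hval p q hcq hzq) hzq)
  refine ⟨H, fun s => hH _ _ (by simp [c]) (funext fun n => ?_),
    fun s => hH _ _ (by simp [c]) (funext fun n => ?_), fun u => ⟨?_, ?_⟩⟩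
  · by_cases hn : n < N
    · simp [z, hn, coord]
    · have := (hαβ n (not_lt.1 hn)).1 s
      refine Eq.trans (b := coord f.1 n s) ?_ rfl
      simpa [z, hn] using this.symm
  · by_cases hn : n < N
    · simp [z, hn, coord]
    · have := (hαβ n (not_lt.1 hn)).2.1 s
      refine Eq.trans (b := coord g.1 n s) ?_ rfl
      simpa [z, hn] using this.symm
  · refine hH _ _ (by simp [c, f.2.1, g.2.1, base]) (funext fun n => ?_)
    have e1 : coord g.1 n 0 = coord f.1 n 0 := by rw [coord_zero, coord_zero]
    have e2 : coord f.1 n 0 = base.1.2 n := by simp [coord, f.2.1]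
    rw [← e2]
    by_cases hn : n < N
    · simp only [z, hn, if_true, e1]; push_cast; ring
    · obtain ⟨ha, -, h0, -⟩ := hαβ n (not_lt.1 hn)
      have := ha 0
      simp only [z, hn, if_false, e1, ← h0]
      rw [← add_mul, ← add_mul, sub_add_cancel, one_mul, one_mul]
      exact this.symm
  · refine hH _ _ (by simp [c, f.2.2, g.2.2, base]) (funext fun n => ?_)
    have e1 : coord g.1 n 1 = coord f.1 n 1 := by
      rw [← coord_closed, ← coord_closed, coord_zero, coord_zero]
    have e2 : coord f.1 n 1 = base.1.2 n := by simp [coord, f.2.2]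
    rw [← e2]
    by_cases hn : n < N
    · simp only [z, hn, if_true, e1]; push_cast; ring
    · obtain ⟨ha, -, -, h0⟩ := hαβ n (not_lt.1 hn)
      have := ha 1
      simp only [z, hn, if_false, e1, ← h0]
      rw [← add_mul, ← add_mul, sub_add_cancel, one_mul, one_mul]
      exact this.symm

theorem loopHomotopic_iff {f g : Loop Tele base} :
    LoopHomotopic f g ↔ ∀ᶠ n in Filter.atTop, ∀ m, Winds f n m ↔ Winds g n m :=
  ⟨eventually_winds_of_homotopic, homotopic_of_eventually_winds⟩

/-! ### The two reductions -/

/-- The loop at height `0` whose `n`-th coordinate turns once if `x n = true` and is constant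
otherwise, as a function of `x` and time. -/
noncomputable def spinFun : C((ℕ → Bool) × I, Tele) :=
  ⟨fun p => ⟨(0, fun n => ((n : ℂ) + 1) *
      Complex.exp (((p.2 : ℝ) * ((p.1 n).toNat * (2 * Real.pi)) : ℝ) * Complex.I)), fun n => by
    have : ‖(n : ℂ) + 1‖ = n + 1 := by exact_mod_cast Complex.norm_natCast (n + 1)
    rw [norm_mul, Complex.norm_exp_ofReal_mul_I, this]
    simp⟩, by
    refine Continuous.subtype_mk ?_ _
    have h : ∀ n, Continuous fun p : (ℕ → Bool) × I => ((p.1 n).toNat : ℝ) := fun n =>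
      (continuous_of_discreteTopology (f := fun b : Bool => (b.toNat : ℝ))).comp (by fun_prop)
    refine continuous_const.prodMk (continuous_pi fun n => ?_)
    have := h n
    fun_prop⟩

/-- The loop `spinFun (x, ·)`. -/
noncomputable def spin (x : ℕ → Bool) : Loop Tele base :=
  ⟨spinFun.curry x, by
    constructor
    · apply Subtype.ext
      refine Prod.ext rfl (funext fun n => ?_)
      simp [spinFun, base]
    · apply Subtype.ext
      refine Prod.ext rfl (funext fun n => ?_)
      cases hx : x n <;> simp [spinFun, base, hx]⟩

lemma measurable_spin : Measurable spin :=
  Continuous.measurable (Continuous.subtype_mk spinFun.curry.continuous _)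

lemma winds_spin (x : ℕ → Bool) (n : ℕ) : Winds (spin x) n (x n).toNat := by
  have hn : ‖(n : ℂ) + 1‖ = n + 1 := by exact_mod_cast Complex.norm_natCast (n + 1)
  have hv : ∀ s, coord (spin x).1 n s = ((n : ℂ) + 1) *
      Complex.exp (((s : ℝ) * ((x n).toNat * (2 * Real.pi)) : ℝ) * Complex.I) := fun s => rfl
  refine ⟨fun s => ?_, ⟨fun s => (s : ℝ) * ((x n).toNat * (2 * Real.pi)), by fun_prop⟩,
    fun s => ?_, by simp⟩
  · rw [hv]
    exact mul_ne_zero (by exact_mod_cast n.succ_ne_zero) (Complex.exp_ne_zero _)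
  · rw [hv, norm_mul, Complex.norm_exp_ofReal_mul_I, hn]
    simp

lemma reduces_E₀ : BorelReducible E₀ (LoopHomotopic (Y := Tele) (y₀ := base)) := by
  refine ⟨spin, measurable_spin, fun x y => ?_⟩
  rw [loopHomotopic_iff]
  refine Filter.eventually_congr (Filter.Eventually.of_forall fun n => ?_)
  constructor
  · intro h m
    have e : ∀ w, Winds (spin w) n m ↔ m = (w n).toNat := fun w =>
      ⟨fun hm => hm.unique (winds_spin w n), fun hm => hm ▸ winds_spin w n⟩
    rw [e, e, h]
  · intro h
    have := ((h _).1 (winds_spin x n)).unique (winds_spin y n)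
    revert this
    cases x n <;> cases y n <;> simp

open Classical in
/-- The indicator, along an enumeration of `ℕ × ℤ`, of the graph of the partial function
sending `n` to the winding number of the `n`-th coordinate. -/
noncomputable def code (f : Loop Tele base) (k : ℕ) : Bool :=
  decide (Winds f k.unpair.1 (Equiv.intEquivNat.symm k.unpair.2))

lemma measurable_code : Measurable code := by
  refine measurable_pi_iff.2 fun k => measurable_to_bool ?_
  have : (fun f => code f k) ⁻¹' {true} =
      {f | HasWinding (coord f.1 k.unpair.1) (Equiv.intEquivNat.symm k.unpair.2)} := by
    ext f
    simp only [Set.mem_preimage, Set.mem_singleton_iff, code, decide_eq_true_eq]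
    rfl
  rw [this]
  exact (isOpen_hasWinding (continuous_coord _) (fun f => coord_closed f _) _).measurableSet

lemma E₀_code_iff (f g : Loop Tele base) :
    E₀ (code f) (code g) ↔ ∀ᶠ n in Filter.atTop, ∀ m, Winds f n m ↔ Winds g n m := by
  have hk : ∀ k, code f k = code g k ↔
      (Winds f k.unpair.1 (Equiv.intEquivNat.symm k.unpair.2) ↔
        Winds g k.unpair.1 (Equiv.intEquivNat.symm k.unpair.2)) := fun k => by
    simp [code]
  constructor
  · intro h
    obtain ⟨N, hN⟩ := Filter.eventually_atTop.1 h
    filter_upwards [Filter.eventually_ge_atTop N] with n hn m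
    have := (hk _).1 (hN (Nat.pair n (Equiv.intEquivNat m)) (hn.trans (Nat.left_le_pair _ _)))
    simpa using this
  · intro h
    obtain ⟨N, hN⟩ := Filter.eventually_atTop.1 h
    -- Each of the coordinates `n < N` contributes at most two indices where the codes differ.
    have hfin : (⋃ n ∈ Finset.range N, (fun m => Nat.pair n (Equiv.intEquivNat m)) ''
        ({m | Winds f n m} ∪ {m | Winds g n m})).Finite := by
      refine Set.Finite.biUnion (Finset.finite_toSet _) fun n _ => Set.Finite.image _ ?_
      exact (Set.Subsingleton.finite fun a ha b hb => HasWinding.unique ha hb).union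
        (Set.Subsingleton.finite fun a ha b hb => HasWinding.unique ha hb)
    unfold E₀
    rw [← Nat.cofinite_eq_atTop]
    filter_upwards [hfin.compl_mem_cofinite] with k hkn
    rw [hk]
    by_cases hlt : k.unpair.1 < N
    · by_contra hne
      apply hkn
      refine Set.mem_biUnion (Finset.mem_coe.2 (Finset.mem_range.2 hlt))
        ⟨Equiv.intEquivNat.symm k.unpair.2, ?_, by simp⟩
      by_contra hor
      rw [Set.mem_union, not_or] at hor
      exact hne (iff_of_false hor.1 hor.2)
    · exact hN _ (not_lt.1 hlt) _

lemma reduces_loopHomotopic : BorelReducible (LoopHomotopic (Y := Tele) (y₀ := base)) E₀ :=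
  ⟨code, measurable_code, fun f g => by rw [loopHomotopic_iff, E₀_code_iff]⟩

end Tele

/-- There is a path-connected Polish space with a basepoint such that
`E₀` is Borel bireducible with the homotopy relation on its loop space. -/
theorem E₀_realized_by_loop_homotopy :
    ∃ (Y : Type) (tY : TopologicalSpace Y), @RealizesHomotopyAux _ _ E₀ Y tY :=
  ⟨Tele, inferInstance, isClosed_Tele.polishSpace, inferInstance, Tele.base,
    Tele.reduces_E₀, Tele.reduces_loopHomotopic⟩
end

section
/- There exists a path-connected Polish space X with basepoint x₀ such that the equivalence relation E₁ of eventual equality on (2^ℕ)^ℕ is Borel bireducible with the homotopy relation ∼_X on the loop space ΩX. -/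
/-!
Let `Y ⊆ ℝ × ℂ^(ℕ × ℕ)` be the closed set of pairs `(t, w)` such that
`1 ≤ ‖w k j‖ + max 0 (t - k)` for all `k` and `j`. It behaves like the mapping telescope of the
projections `∏_{k ≥ 0} (S¹)^ℕ → ∏_{k ≥ 1} (S¹)^ℕ → ⋯`: as long as the height `t` is at most `k`, the
coordinates `w k j` stay outside the open unit disc, and once `t ≥ k + 1` they are unconstrained.

Every loop and every homotopy of loops is compact, hence lies below some height `N`; for `k ≥ N` the
coordinates `w k j` are then nonvanishing and have winding numbers around `0`, which the homotopy
preserves. Conversely, if two loops below height `N` have equal winding numbers in all coordinates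
with `k ≥ N`, lift both loops up to height `N` (`raise`), where the coordinates with `k < N` can be
contracted linearly, while the others are deformed by interpolating their logarithms. So
`π₁(Y) = (ℤ^ℕ)^ℕ / (eventual equality)`, see `loopHomotopic_iff`.

Since having winding number `m` in a given coordinate is an open condition on loops, recording the
winding numbers as elements of `2^ℕ` reduces homotopy to `E₁`; conversely `c ∈ (2^ℕ)^ℕ` is sent to a
loop at height `0` with winding numbers `c k j ∈ {0, 1}`.
-/


open MeasureTheory

/-- The relation `E₁` of eventual equality on `(2^ℕ)^ℕ`. -/
def E₁ (c d : ℕ → (ℕ → Bool)) : Prop := ∀ᶠ n in Filter.atTop, c n = d n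

namespace LoopE₁

open Filter Topology unitInterval

/-! ### Winding numbers -/

/-- The path `u` in `ℂ` has a continuous logarithm from `0` to `2πim`; that is, `u` is a loop at `1`
in `ℂ \ {0}` with winding number `m`. -/
def HasWinding (u : C(I, ℂ)) (m : ℤ) : Prop :=
  ∃ L : C(I, ℂ), L 0 = 0 ∧ L 1 = m * (2 * Real.pi * Complex.I) ∧ ∀ s, Complex.exp (L s) = u s

lemma exists_hasWinding (u : C(I, ℂ)) (h : ∀ s, u s ≠ 0) (h0 : u 0 = 1) (h1 : u 1 = 1) :
    ∃ m, HasWinding u m := by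
  let v : C(I, {z : ℂ // z ≠ 0}) := ⟨fun s => ⟨u s, h s⟩, by fun_prop⟩
  obtain ⟨L, hL, hL0⟩ := Complex.isCoveringMap_exp.exists_path_lifts v 0
    (Subtype.ext (by simp [v, h0]))
  have hL' : ∀ s, Complex.exp (L s) = u s := fun s => congrArg Subtype.val (congrFun hL s)
  obtain ⟨m, hm⟩ := Complex.exp_eq_one_iff.1 ((hL' 1).trans h1)
  exact ⟨m, L, hL0, hm, hL'⟩

lemma HasWinding.unique {u : C(I, ℂ)} {m m' : ℤ} (h : HasWinding u m) (h' : HasWinding u m') :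
    m = m' := by
  obtain ⟨L, hL0, hL1, hL⟩ := h
  obtain ⟨L', hL0', hL1', hL'⟩ := h'
  let v : C(I, {z : ℂ // z ≠ 0}) :=
    ⟨fun s => ⟨u s, by rw [← hL s]; exact Complex.exp_ne_zero _⟩, by fun_prop⟩
  have hv : v 0 = ⟨Complex.exp 0, Complex.exp_ne_zero 0⟩ :=
    Subtype.ext (by simp [v, ← hL, hL0])
  have e1 := (Complex.isCoveringMap_exp.eq_liftPath_iff' (γ := v) (e := 0) hv (Γ := L)).2
    ⟨funext fun s => Subtype.ext (hL s), hL0⟩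
  have e2 := (Complex.isCoveringMap_exp.eq_liftPath_iff' (γ := v) (e := 0) hv (Γ := L')).2
    ⟨funext fun s => Subtype.ext (hL' s), hL0'⟩
  have e : L 1 = L' 1 := by rw [e1, ← e2]
  rw [hL1, hL1'] at e
  exact_mod_cast mul_right_cancel₀ Complex.two_pi_I_ne_zero e

/-- Winding numbers are locally constant among loops at `1`: a loop `v` close to `u` satisfies
`v / u ∈ slitPlane`, so that a logarithm of `u` can be corrected by `log (v / u)`. -/
lemma HasWinding.eventually {u : C(I, ℂ)} {m : ℤ} (h : HasWinding u m) :
    ∀ᶠ v in 𝓝 u, v 0 = 1 → v 1 = 1 → HasWinding v m := by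
  obtain ⟨L, hL0, hL1, hL⟩ := h
  have hu : ∀ s, u s ≠ 0 := fun s => by rw [← hL s]; exact Complex.exp_ne_zero _
  obtain ⟨s₀, -, hs₀⟩ := isCompact_univ.exists_isMinOn (Set.univ_nonempty (α := I))
    (f := fun s => ‖u s‖) (by fun_prop)
  have hpos : 0 < ‖u s₀‖ := norm_pos_iff.2 (hu s₀)
  filter_upwards [Metric.ball_mem_nhds u hpos] with v hv hv0 hv1
  have hs : ∀ s, v s / u s ∈ Complex.slitPlane := by
    intro s
    rw [← add_sub_cancel 1 (v s / u s)]
    apply Complex.mem_slitPlane_of_norm_lt_one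
    have h1 : ‖v s - u s‖ < ‖u s‖ := by
      rw [← dist_eq_norm]
      exact ((ContinuousMap.dist_apply_le_dist s).trans_lt hv).trans_le
        (isMinOn_iff.1 hs₀ s (Set.mem_univ s))
    rw [div_sub_one (hu s), norm_div, div_lt_one (norm_pos_iff.2 (hu s))]
    exact h1
  have hu0 : u 0 = 1 := by rw [← hL, hL0, Complex.exp_zero]
  have hu1 : u 1 = 1 := by
    rw [← hL, hL1]; exact Complex.exp_int_mul_two_pi_mul_I m
  refine ⟨⟨fun s => L s + Complex.log (v s / u s), ?_⟩, ?_, ?_, ?_⟩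
  · exact L.continuous.add ((v.continuous.div u.continuous hu).clog hs)
  · simp [hL0, hv0, hu0]
  · simp [hL1, hv1, hu1]
  · intro s
    have hne : v s / u s ≠ 0 := Complex.slitPlane_ne_zero (hs s)
    simp only [ContinuousMap.coe_mk]
    rw [Complex.exp_add, hL, Complex.exp_log hne, mul_div_cancel₀ _ (hu s)]

/-- Winding numbers are constant along a path of loops at `1` in `ℂ \ {0}`. -/
lemma hasWinding_homotopy {u : I → C(I, ℂ)} (hu : Continuous u) (hne : ∀ t s, u t s ≠ 0)
    (h0 : ∀ t, u t 0 = 1) (h1 : ∀ t, u t 1 = 1) (m : ℤ) :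
    HasWinding (u 0) m ↔ HasWinding (u 1) m := by
  have hop : ∀ m', IsOpen {t | HasWinding (u t) m'} := fun m' => by
    rw [isOpen_iff_mem_nhds]
    intro t ht
    filter_upwards [hu.continuousAt.eventually (HasWinding.eventually ht)] with t' ht'
    exact ht' (h0 t') (h1 t')
  have hcl : IsClopen {t | HasWinding (u t) m} := by
    refine ⟨⟨?_⟩, hop m⟩
    have : {t | HasWinding (u t) m}ᶜ = ⋃ m' ∈ {m' : ℤ | m' ≠ m}, {t | HasWinding (u t) m'} := by
      ext t
      simp only [Set.mem_compl_iff, Set.mem_ofPred_eq, Set.mem_iUnion, exists_prop]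
      refine ⟨fun h => ?_, fun ⟨m', hm, h⟩ h' => hm (h.unique h')⟩
      obtain ⟨m', hm'⟩ := exists_hasWinding (u t) (hne t) (h0 t) (h1 t)
      exact ⟨m', fun e => h (e ▸ hm'), hm'⟩
    rw [this]
    exact isOpen_biUnion fun m' _ => hop m'
  rcases isClopen_iff.1 hcl with h | h
  · have a : ∀ t, ¬ HasWinding (u t) m := fun t ht => by
      have : t ∈ {t | HasWinding (u t) m} := ht
      rwa [h] at this
    exact ⟨fun hh => (a 0 hh).elim, fun hh => (a 1 hh).elim⟩
  · have a : ∀ t, HasWinding (u t) m := fun t => by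
      have : t ∈ {t | HasWinding (u t) m} := h ▸ Set.mem_univ t
      exact this
    exact ⟨fun _ => a 1, fun _ => a 0⟩

/-! ### The telescope -/

/-- The telescope-like space `Y`: `t` is the height, and the coordinates `w k j` have to avoid a disc
around `0`, which is the open unit disc for `t ≤ k` and shrinks to nothing at `t = k + 1`. -/
abbrev Tel : Type :=
  {p : ℝ × (ℕ → ℕ → ℂ) // ∀ k j, 1 ≤ ‖p.2 k j‖ + max 0 (p.1 - k)}

/-- The basepoint of the telescope: height `0`, all coordinates equal to `1`. -/
def base : Tel := ⟨(0, fun _ _ => 1), fun k j => by simp⟩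

instance : PolishSpace Tel := by
  refine IsClosed.polishSpace
    (s := {p : ℝ × (ℕ → ℕ → ℂ) | ∀ k j, 1 ≤ ‖p.2 k j‖ + max 0 (p.1 - k)}) ?_
  simp only [Set.ofPred_forall]
  refine isClosed_iInter fun k => isClosed_iInter fun j => isClosed_le (by fun_prop) (by fun_prop)

lemma Tel.one_le_norm (x : Tel) {k : ℕ} (j : ℕ) (h : x.1.1 ≤ k) : 1 ≤ ‖x.1.2 k j‖ := by
  have := x.2 k j
  rwa [max_eq_left (by linarith), add_zero] at this

lemma joined_of {x y : Tel} (h : I → ℝ × (ℕ → ℕ → ℂ)) (hc : Continuous h)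
    (hm : ∀ s k j, 1 ≤ ‖(h s).2 k j‖ + max 0 ((h s).1 - k)) (h0 : h 0 = x.1) (h1 : h 1 = y.1) :
    Joined x y :=
  ⟨⟨⟨fun s => ⟨h s, hm s⟩, by fun_prop⟩, Subtype.ext h0, Subtype.ext h1⟩⟩

lemma one_le_of_lt {k N : ℕ} {a t : ℝ} (hk : k < N) (ht : (N : ℝ) ≤ t) (ha : 0 ≤ a) :
    1 ≤ a + max 0 (t - k) := by
  have h1 : (k : ℝ) + 1 ≤ N := by exact_mod_cast hk
  have := le_max_right 0 (t - k)
  linarith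

lemma one_le_of_one_le {a b : ℝ} (ha : 1 ≤ a) : 1 ≤ a + max 0 b := by
  have := le_max_left 0 b
  linarith

/-- Any point can be raised to an integer height `N`, moved there to the point with all coordinates
equal to `1` (linearly for `k < N`, through logarithms for `k ≥ N`), and then lowered to `base`. -/
lemma joined_base (x : Tel) : Joined x base := by
  obtain ⟨N, hN⟩ := exists_nat_ge x.1.1
  let y : Tel := ⟨(N, x.1.2), fun k j => (x.2 k j).trans (by gcongr)⟩
  let z : Tel := ⟨(N, fun _ _ => 1), fun k j => one_le_of_one_le (by simp)⟩
  have hxy : Joined x y := by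
    refine joined_of (fun s => (x.1.1 + s * (N - x.1.1), x.1.2)) (by fun_prop) ?_ (by simp)
      (by simp [y])
    intro s k j
    refine (x.2 k j).trans ?_
    have : 0 ≤ (s : ℝ) * (N - x.1.1) := mul_nonneg s.2.1 (by linarith)
    gcongr
    simp only
    linarith
  have hyz : Joined y z := by
    refine joined_of (fun s => (N, fun k j => if k < N then
      (1 - (s : ℂ)) * x.1.2 k j + s else Complex.exp ((1 - (s : ℂ)) * Complex.log (x.1.2 k j))))
      ?_ ?_ ?_ ?_
    · refine continuous_const.prodMk (continuous_pi fun k => continuous_pi fun j => ?_)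
      split_ifs <;> fun_prop
    · intro s k j
      by_cases hk : k < N
      · exact one_le_of_lt hk le_rfl (norm_nonneg _)
      · simp only [if_neg hk]
        refine one_le_of_one_le ?_
        have h1 := x.one_le_norm (k := k) j (hN.trans (by exact_mod_cast not_lt.1 hk))
        rw [Complex.norm_exp]
        refine Real.one_le_exp ?_
        have : ((1 - (s : ℂ)) * Complex.log (x.1.2 k j)).re
            = (1 - s) * Real.log ‖x.1.2 k j‖ := by
          rw [← Complex.log_re, ← Complex.re_ofReal_mul]; simp
        rw [this]
        exact mul_nonneg (by linarith [s.2.2]) (Real.log_nonneg h1)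
    · refine Prod.ext rfl (funext fun k => funext fun j => ?_)
      by_cases hk : k < N
      · simp [hk, y]
      · have h1 := x.one_le_norm (k := k) j (hN.trans (by exact_mod_cast not_lt.1 hk))
        have h2 : x.1.2 k j ≠ 0 := norm_pos_iff.1 (by linarith)
        simp [hk, y, Complex.exp_log h2]
    · refine Prod.ext rfl (funext fun k => funext fun j => ?_)
      by_cases hk : k < N <;> simp [hk, z]
  have hzb : Joined z base := by
    refine joined_of (fun s => ((1 - s) * N, fun _ _ => 1)) (by fun_prop) ?_ (by simp [z])
      (by simp [base])
    intro s k j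
    exact one_le_of_one_le (by simp)
  exact (hxy.trans hyz).trans hzb

instance : PathConnectedSpace Tel :=
  ⟨⟨base⟩, fun x y => (joined_base x).trans (joined_base y).symm⟩

/-! ### Homotopies of loops in the telescope -/

/-- The coordinate path `s ↦ w k j` of a loop. -/
noncomputable def co (f : Loop Tel base) (k j : ℕ) : C(I, ℂ) := ⟨fun s => (f.1 s).1.2 k j, by fun_prop⟩

@[simp] lemma co_apply (f : Loop Tel base) (k j : ℕ) (s : I) : co f k j s = (f.1 s).1.2 k j := rfl

lemma continuous_co (k j : ℕ) : Continuous fun f : Loop Tel base => co f k j := by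
  let π : C(Tel, ℂ) := ⟨fun x => x.1.2 k j, by fun_prop⟩
  exact (ContinuousMap.continuous_postcomp π).comp continuous_subtype_val

lemma co_zero (f : Loop Tel base) (k j : ℕ) : co f k j 0 = 1 := by simp [f.2.1, base]

lemma co_one (f : Loop Tel base) (k j : ℕ) : co f k j 1 = 1 := by simp [f.2.2, base]

lemma isOpen_hasWinding (k j : ℕ) (m : ℤ) :
    IsOpen {f : Loop Tel base | HasWinding (co f k j) m} := by
  rw [isOpen_iff_mem_nhds]
  intro f hf
  filter_upwards [(continuous_co k j).continuousAt.eventually (HasWinding.eventually hf)] with g hg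
  exact hg (co_zero g k j) (co_one g k j)

lemma exists_height_le {A : Type*} [TopologicalSpace A] [CompactSpace A] (F : C(A, Tel)) :
    ∃ N : ℕ, ∀ a, (F a).1.1 ≤ N := by
  obtain ⟨C, hC⟩ := (isCompact_range (f := fun a => (F a).1.1) (by fun_prop)).bddAbove
  obtain ⟨N, hN⟩ := exists_nat_ge C
  exact ⟨N, fun a => (hC ⟨a, rfl⟩).trans hN⟩

lemma exists_le_height {A : Type*} [TopologicalSpace A] [CompactSpace A] (F : C(A, Tel)) :
    ∃ M : ℝ, ∀ a, -M ≤ (F a).1.1 := by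
  obtain ⟨C, hC⟩ := (isCompact_range (f := fun a => (F a).1.1) (by fun_prop)).bddBelow
  exact ⟨-C, fun a => by simpa using hC ⟨a, rfl⟩⟩

lemma loopHomotopic_iff_homotopicRel {f g : Loop Tel base} :
    LoopHomotopic f g ↔ ContinuousMap.HomotopicRel f.1 g.1 {0, 1} := by
  constructor
  · rintro ⟨H, h0, h1, hb⟩
    refine ⟨⟨⟨⟨fun p => H (p.2, p.1), by fun_prop⟩, h0, h1⟩, ?_⟩⟩
    rintro t s (rfl | rfl)
    · exact (hb t).1.trans f.2.1.symm
    · exact (hb t).2.trans f.2.2.symm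
  · rintro ⟨H⟩
    refine ⟨⟨fun p => H (p.2, p.1), by fun_prop⟩, fun s => H.apply_zero s,
      fun s => H.apply_one s, fun t => ⟨?_, ?_⟩⟩
    · exact (H.eq_fst t (by simp)).trans f.2.1
    · exact (H.eq_fst t (by simp)).trans f.2.2

lemma loopHomotopic_of {f g : Loop Tel base} (h : I × I → ℝ × (ℕ → ℕ → ℂ)) (hc : Continuous h)
    (hm : ∀ p k j, 1 ≤ ‖(h p).2 k j‖ + max 0 ((h p).1 - k))
    (h0 : ∀ s, h (s, 0) = (f.1 s).1) (h1 : ∀ s, h (s, 1) = (g.1 s).1)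
    (hb0 : ∀ t, h (0, t) = base.1) (hb1 : ∀ t, h (1, t) = base.1) : LoopHomotopic f g :=
  ⟨⟨fun p => ⟨h p, hm p⟩, by fun_prop⟩, fun s => Subtype.ext (h0 s), fun s => Subtype.ext (h1 s),
    fun t => ⟨Subtype.ext (hb0 t), Subtype.ext (hb1 t)⟩⟩

/-- The map of `[0, 1]` that is `0` up to `1/3`, `1` from `2/3` on, and linear in between. -/
noncomputable def sig (s : I) : I := Set.projIcc 0 1 zero_le_one (3 * (s : ℝ) - 1)

@[fun_prop] lemma continuous_sig : Continuous sig :=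
  continuous_projIcc.comp (by fun_prop)

@[simp] lemma sig_zero : sig 0 = 0 := Set.projIcc_of_le_left _ (by norm_num)

@[simp] lemma sig_one : sig 1 = 1 := Set.projIcc_of_right_le _ (by norm_num)

/-- The trapezoidal function on `[0, 1]` that vanishes at the ends and is `1` on `[1/3, 2/3]`. -/
noncomputable def bump (s : I) : ℝ := min 1 (min (3 * (s : ℝ)) (3 - 3 * s))

@[fun_prop] lemma continuous_bump : Continuous bump := by unfold bump; fun_prop

@[simp] lemma bump_zero : bump 0 = 0 := by simp [bump]

@[simp] lemma bump_one : bump 1 = 0 := by simp [bump]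

lemma bump_nonneg (s : I) : 0 ≤ bump s :=
  le_min zero_le_one (le_min (by linarith [s.2.1]) (by linarith [s.2.2]))

lemma sig_or_bump (s : I) : sig s = 0 ∨ sig s = 1 ∨ bump s = 1 := by
  rcases le_total (3 * (s : ℝ)) 1 with h | h
  · exact Or.inl (Set.projIcc_of_le_left _ (by linarith))
  rcases le_total 2 (3 * (s : ℝ)) with h' | h'
  · exact Or.inr (Or.inl (Set.projIcc_of_right_le _ (by linarith)))
  · exact Or.inr (Or.inr (min_eq_left (le_min h (by linarith))))

/-- The loop that first rises by `M` over the basepoint, then runs through `f` raised by `M`, and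
then descends by `M`. -/
noncomputable def raise (f : Loop Tel base) (M : ℝ) (hM : 0 ≤ M) : Loop Tel base :=
  ⟨⟨fun s => ⟨((f.1 (sig s)).1.1 + M * bump s, (f.1 (sig s)).1.2), fun k j =>
      ((f.1 (sig s)).2 k j).trans (by
        have := mul_nonneg hM (bump_nonneg s)
        gcongr
        simpa using this)⟩, by fun_prop⟩,
    Subtype.ext (by simp [f.2.1, base]), Subtype.ext (by simp [f.2.2, base])⟩

lemma loopHomotopic_raise (f : Loop Tel base) (M : ℝ) (hM : 0 ≤ M) :
    LoopHomotopic f (raise f M hM) := by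
  -- the convex combination `(1 - t) s + t (sig s)`, which is already in `[0, 1]`
  let r : I × I → I := fun p =>
    Set.projIcc 0 1 zero_le_one ((1 - (p.2 : ℝ)) * p.1 + p.2 * sig p.1)
  have hr : Continuous r := continuous_projIcc.comp (by fun_prop)
  have r0 : ∀ s, r (s, 0) = s := fun s => by simp [r]
  have r1 : ∀ s, r (s, 1) = sig s := fun s => by simp [r]
  have rb0 : ∀ t, r (0, t) = 0 := fun t => by simp [r]
  have rb1 : ∀ t, r (1, t) = 1 := fun t => by simp [r]
  refine loopHomotopic_of
    (fun p => ((f.1 (r p)).1.1 + p.2 * (M * bump p.1), (f.1 (r p)).1.2)) (by fun_prop) ?_ ?_ ?_ ?_ ?_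
  · intro p k j
    refine ((f.1 (r p)).2 k j).trans ?_
    have := mul_nonneg p.2.2.1 (mul_nonneg hM (bump_nonneg p.1))
    gcongr
    simpa using this
  · intro s; simp [r0]
  · intro s; simp [r1, raise]
  · intro t; simp [rb0, f.2.1, base]
  · intro t; simp [rb1, f.2.2, base]

/-- Once two loops below height `N` are raised above height `N`, equality of the winding numbers for
`k ≥ N` makes them homotopic. -/
lemma loopHomotopic_raise_raise {f g : Loop Tel base} {N : ℕ} {M : ℝ} (hM : 0 ≤ M)
    (hf : ∀ s, (f.1 s).1.1 ≤ N) (hg : ∀ s, (g.1 s).1.1 ≤ N)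
    (hf' : ∀ s, N ≤ (f.1 s).1.1 + M) (hg' : ∀ s, N ≤ (g.1 s).1.1 + M)
    (hw : ∀ k, N ≤ k → ∀ j, ∃ m, HasWinding (co f k j) m ∧ HasWinding (co g k j) m) :
    LoopHomotopic (raise f M hM) (raise g M hM) := by
  have hex : ∀ k j, ∃ L L' : C(I, ℂ), N ≤ k → L 0 = 0 ∧ L' 0 = 0 ∧ L 1 = L' 1 ∧
      (∀ s, Complex.exp (L s) = (f.1 s).1.2 k j) ∧ ∀ s, Complex.exp (L' s) = (g.1 s).1.2 k j := by
    intro k j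
    by_cases hk : N ≤ k
    · obtain ⟨m, ⟨L, h0, h1, h⟩, ⟨L', h0', h1', h'⟩⟩ := hw k hk j
      exact ⟨L, L', fun _ => ⟨h0, h0', h1.trans h1'.symm, h, h'⟩⟩
    · exact ⟨0, 0, fun h => (hk h).elim⟩
  choose L L' hL using hex
  -- norms at least `1` give logarithms with nonnegative real part
  have hre : ∀ k j s, N ≤ k → 0 ≤ (L k j s).re ∧ 0 ≤ (L' k j s).re := by
    intro k j s hk
    obtain ⟨-, -, -, h1, h2⟩ := hL k j hk
    have hk' : (N : ℝ) ≤ k := by exact_mod_cast hk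
    have a := (f.1 s).one_le_norm j ((hf s).trans hk')
    have b := (g.1 s).one_le_norm j ((hg s).trans hk')
    rw [← h1, Complex.norm_exp, Real.one_le_exp_iff] at a
    rw [← h2, Complex.norm_exp, Real.one_le_exp_iff] at b
    exact ⟨a, b⟩
  refine loopHomotopic_of (fun p =>
    ((1 - (p.2 : ℝ)) * (f.1 (sig p.1)).1.1 + p.2 * (g.1 (sig p.1)).1.1 + M * bump p.1,
      fun k j => if k < N then
        (1 - (p.2 : ℂ)) * (f.1 (sig p.1)).1.2 k j + p.2 * (g.1 (sig p.1)).1.2 k j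
      else Complex.exp ((1 - (p.2 : ℂ)) * L k j (sig p.1) + p.2 * L' k j (sig p.1))))
    ?_ ?_ ?_ ?_ ?_ ?_
  · refine Continuous.prodMk (by fun_prop) (continuous_pi fun k => continuous_pi fun j => ?_)
    split_ifs <;> fun_prop
  · rintro ⟨s, t⟩ k j
    have ht0 : (0 : ℝ) ≤ t := t.2.1
    have ht1 : (0 : ℝ) ≤ 1 - t := by linarith [t.2.2]
    by_cases hk : k < N
    · simp only [if_pos hk]
      -- near the ends, the coordinates are constantly `1`; in the middle, the height is at least `N`
      rcases sig_or_bump s with h | h | h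
      · simp [h, f.2.1, g.2.1, base]
      · simp [h, f.2.2, g.2.2, base]
      · refine one_le_of_lt hk ?_ (norm_nonneg _)
        rw [h]
        nlinarith [mul_le_mul_of_nonneg_left (hf' (sig s)) ht1,
          mul_le_mul_of_nonneg_left (hg' (sig s)) ht0]
    · simp only [if_neg hk]
      refine one_le_of_one_le ?_
      rw [Complex.norm_exp]
      refine Real.one_le_exp ?_
      have : ((1 - (t : ℂ)) * L k j (sig s) + t * L' k j (sig s)).re
          = (1 - t) * (L k j (sig s)).re + t * (L' k j (sig s)).re := by simp
      rw [this]
      obtain ⟨a, b⟩ := hre k j (sig s) (not_lt.1 hk)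
      exact add_nonneg (mul_nonneg ht1 a) (mul_nonneg ht0 b)
  · intro s
    refine Prod.ext (by simp [raise]) (funext fun k => funext fun j => ?_)
    by_cases hk : k < N
    · simp [hk, raise]
    · simp [hk, raise, (hL k j (not_lt.1 hk)).2.2.2.1]
  · intro s
    refine Prod.ext (by simp [raise]) (funext fun k => funext fun j => ?_)
    by_cases hk : k < N
    · simp [hk, raise]
    · simp [hk, raise, (hL k j (not_lt.1 hk)).2.2.2.2]
  · intro t
    refine Prod.ext (by simp [f.2.1, g.2.1, base]) (funext fun k => funext fun j => ?_)
    by_cases hk : k < N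
    · simp [hk, f.2.1, g.2.1, base]
    · obtain ⟨a, b, -⟩ := hL k j (not_lt.1 hk)
      simp [hk, a, b, base]
  · intro t
    refine Prod.ext (by simp [f.2.2, g.2.2, base]) (funext fun k => funext fun j => ?_)
    by_cases hk : k < N
    · simp [hk, f.2.2, g.2.2, base]
    · obtain ⟨-, -, a, b, -⟩ := hL k j (not_lt.1 hk)
      have h1 := b 1
      rw [a, f.2.2] at h1
      simp only [sig_one, a, hk, if_false]
      rw [← add_mul, sub_add_cancel, one_mul]
      exact h1

lemma ne_zero_of_height_le {x : Tel} {N k : ℕ} (j : ℕ) (h : x.1.1 ≤ N) (hk : N ≤ k) :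
    x.1.2 k j ≠ 0 := by
  have := x.one_le_norm (k := k) j (h.trans (by exact_mod_cast hk))
  exact norm_pos_iff.1 (by linarith)

/-- The homotopy class of a loop is determined by the germ at infinity of its winding numbers. -/
lemma loopHomotopic_iff {f g : Loop Tel base} : LoopHomotopic f g ↔
    ∃ N, ∀ k, N ≤ k → ∀ j m, HasWinding (co f k j) m ↔ HasWinding (co g k j) m := by
  constructor
  · rintro ⟨H, h0, h1, hb⟩
    obtain ⟨N, hN⟩ := exists_height_le H
    refine ⟨N, fun k hk j m => ?_⟩
    let G : C(I × I, ℂ) := ⟨fun p => (H (p.2, p.1)).1.2 k j, by fun_prop⟩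
    have e0 : G.curry 0 = co f k j := by ext s; simp [G, h0]
    have e1 : G.curry 1 = co g k j := by ext s; simp [G, h1]
    rw [← e0, ← e1]
    refine hasWinding_homotopy G.curry.continuous ?_ ?_ ?_ m
    · intro t s
      exact ne_zero_of_height_le j (hN (s, t)) hk
    · intro t; simp [G, (hb t).1, base]
    · intro t; simp [G, (hb t).2, base]
  · rintro ⟨N₀, hw⟩
    obtain ⟨N₁, h1⟩ := exists_height_le f.1
    obtain ⟨N₂, h2⟩ := exists_height_le g.1
    obtain ⟨M₁, m1⟩ := exists_le_height f.1
    obtain ⟨M₂, m2⟩ := exists_le_height g.1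
    set N := max N₀ (max N₁ N₂) with hN
    have hN1 : (N₁ : ℝ) ≤ N := by exact_mod_cast (by omega : N₁ ≤ N)
    have hN2 : (N₂ : ℝ) ≤ N := by exact_mod_cast (by omega : N₂ ≤ N)
    have hM : 0 ≤ max 0 (max M₁ M₂) + (N : ℝ) := by positivity
    have hM1 : M₁ ≤ max 0 (max M₁ M₂) := by simp
    have hM2 : M₂ ≤ max 0 (max M₁ M₂) := by simp
    have key := loopHomotopic_raise_raise (f := f) (g := g) (N := N) hM
      (fun s => (h1 s).trans hN1) (fun s => (h2 s).trans hN2)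
      (fun s => by linarith [m1 s]) (fun s => by linarith [m2 s]) (fun k hk j => by
        obtain ⟨m, hm⟩ := exists_hasWinding (co f k j)
          (fun s => ne_zero_of_height_le j (h1 s) (by omega)) (co_zero f k j) (co_one f k j)
        exact ⟨m, hm, (hw k (by omega) j m).1 hm⟩)
    have hf := loopHomotopic_raise f _ hM
    have hg := loopHomotopic_raise g _ hM
    rw [loopHomotopic_iff_homotopicRel] at key hf hg ⊢
    exact (hf.trans key).trans hg.symm

/-! ### The reductions -/

/-- The loop at height `0` whose `(k, j)`-th coordinate winds once around `0` if `c k j = true` and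
is constant otherwise. -/
noncomputable def loopOf (c : ℕ → ℕ → Bool) : Loop Tel base :=
  ⟨⟨fun s => ⟨(0, fun k j => Complex.exp
      (((s * (if c k j then 1 else 0) : ℝ) : ℂ) * (2 * Real.pi * Complex.I))), fun k j => by
        refine one_le_of_one_le (le_of_eq ?_)
        rw [Complex.norm_exp]; simp⟩, by fun_prop⟩,
    Subtype.ext (by simp [base]), Subtype.ext (by
      refine Prod.ext rfl (funext fun k => funext fun j => ?_)
      by_cases h : c k j <;> simp [base, h])⟩

lemma continuous_loopOf : Continuous loopOf := by
  refine Continuous.subtype_mk (ContinuousMap.continuous_of_continuous_uncurry _ ?_) _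
  refine Continuous.subtype_mk (continuous_const.prodMk
    (continuous_pi fun k => continuous_pi fun j => ?_)) _
  have h : Continuous fun b : Bool => (if b then 1 else 0 : ℝ) := continuous_of_discreteTopology
  have h' : Continuous fun p : (ℕ → ℕ → Bool) × I => (if p.1 k j then 1 else 0 : ℝ) :=
    h.comp (by fun_prop)
  fun_prop

lemma hasWinding_loopOf (c : ℕ → ℕ → Bool) (k j : ℕ) :
    HasWinding (co (loopOf c) k j) (if c k j then 1 else 0) := by
  refine ⟨⟨fun s => ((s * (if c k j then 1 else 0) : ℝ) : ℂ) * (2 * Real.pi * Complex.I),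
    by fun_prop⟩, ?_, ?_, ?_⟩
  · simp
  · by_cases h : c k j <;> simp [h]
  · intro s; rfl

lemma reduction_loopOf : IsBorelReduction loopOf E₁ (LoopHomotopic (Y := Tel) (y₀ := base)) := by
  refine ⟨continuous_loopOf.measurable, fun c d => ?_⟩
  rw [loopHomotopic_iff, E₁, eventually_atTop]
  refine exists_congr fun N => forall_congr' fun k => imp_congr_right fun _ => ?_
  constructor
  · intro h j m
    have e : co (loopOf c) k j = co (loopOf d) k j := by ext s; simp [loopOf, h]
    rw [e]
  · intro h
    funext j
    have := ((h j _).1 (hasWinding_loopOf c k j)).unique (hasWinding_loopOf d k j)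
    by_cases hc : c k j <;> by_cases hd : d k j <;> simp_all

open Classical in
/-- The winding numbers of the `k`-th block of coordinates of a loop, coded as an element of `2^ℕ`:
the bit at `⟨j, e⟩` says whether the winding number at `(k, j)` is the `e`-th integer. If that winding
number is undefined, all these bits are `false`. -/
noncomputable def code (f : Loop Tel base) : ℕ → ℕ → Bool := fun k p =>
  decide (HasWinding (co f k p.unpair.1) (Equiv.intEquivNat.symm p.unpair.2))

lemma reduction_code : IsBorelReduction code (LoopHomotopic (Y := Tel) (y₀ := base)) E₁ := by
  refine ⟨?_, fun f g => ?_⟩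
  · refine measurable_pi_iff.2 fun k => measurable_pi_iff.2 fun p => measurable_to_bool ?_
    convert (isOpen_hasWinding k p.unpair.1 (Equiv.intEquivNat.symm p.unpair.2)).measurableSet using 1
    ext f
    simp [code]
  · rw [loopHomotopic_iff, E₁, eventually_atTop]
    refine exists_congr fun N => forall_congr' fun k => imp_congr_right fun _ => ?_
    constructor
    · intro h
      funext p
      simp only [code]
      exact decide_eq_decide.2 (h _ _)
    · intro h j m
      have := congrFun h (Nat.pair j (Equiv.intEquivNat m))
      simpa [code] using this

end LoopE₁

/-- There is a path-connected Polish space with a basepoint such that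
`E₁` is Borel bireducible with the homotopy relation on its loop space. -/
theorem E₁_realized_by_loop_homotopy :
    ∃ (Y : Type) (tY : TopologicalSpace Y), @RealizesHomotopyAux _ _ E₁ Y tY :=
  ⟨LoopE₁.Tel, inferInstance, inferInstance, inferInstance, LoopE₁.base,
    ⟨_, LoopE₁.reduction_loopOf⟩, ⟨_, LoopE₁.reduction_code⟩⟩
end
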